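/- arXiv:2403.09992 — 2 statements merged into one kernel-verified Lean document; each statement's English description precedes it below -/
import Mathlib

section
/- Let X be a geodesic metric space with basepoint o, let G be a countable group acting on X by isometries containing two independent contracting isometries, and let μ be a non-elementary probability measure on G. Then there exist K > 0 and ε > 0 with the following property: for every integer k > 2, every j with 1 < j < k, every a, b, c ∈ G, and every family (ν_i) (for 2 ≤ i ≤ k−1, i ≠ j) of probability measures on G with ‖ν_i − μ‖₀ < ε, if one sets g₁ = a, g_j = b, g_k = c and draws the remaining g_i (2 ≤ i ≤ k−1, i ≠ j) independently with law ν_i, then with probability at least 1 − K e^{−k/K} there exists l with 1 < l < k such that d((g₁g₂⋯g_l)·o, im γ) < K for every geodesic γ in X from o to (g₁g₂⋯g_k)·o. -/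
open Filter Topology Pointwise

/-- `f` parametrizes a geodesic from `x` to `y` by arclength on `[0, dist x y]`. -/
def IsGeodesicSegment {X : Type*} [MetricSpace X] (f : ℝ → X) (x y : X) : Prop :=
  f 0 = x ∧ f (dist x y) = y ∧
    ∀ s ∈ Set.Icc (0 : ℝ) (dist x y), ∀ t ∈ Set.Icc (0 : ℝ) (dist x y),
      dist (f s) (f t) = |s - t|

/-- `X` is a geodesic metric space: any two points are joined by a geodesic. -/
def IsGeodesicSpace (X : Type*) [MetricSpace X] : Prop :=
  ∀ x y : X, ∃ f : ℝ → X, IsGeodesicSegment f x y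

/-- Nearest-point projection of `x` to the set `A`. -/
def projSet {X : Type*} [MetricSpace X] (A : Set X) (x : X) : Set X :=
  {a ∈ A | dist x a = Metric.infDist x A}

/-- Nearest-point projection of the set `B` to the set `A`. -/
def projSetOf {X : Type*} [MetricSpace X] (A B : Set X) : Set X :=
  ⋃ x ∈ B, projSet A x

/-- A `K`-quasigeodesic indexed by `ℤ`. -/
def IsQuasigeodesicZ {X : Type*} [MetricSpace X] (K : ℝ) (γ : ℤ → X) : Prop :=
  ∀ s t : ℤ, |(s : ℝ) - (t : ℝ)| / K - K ≤ dist (γ s) (γ t) ∧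
    dist (γ s) (γ t) ≤ K * |(s : ℝ) - (t : ℝ)| + K

/-- A `K`-contracting axis indexed by `ℤ`: a `K`-quasigeodesic such that every geodesic
staying `K`-far from it has nearest-point projection of diameter `< K`. -/
def IsContractingAxisZ {X : Type*} [MetricSpace X] (K : ℝ) (γ : ℤ → X) : Prop :=
  IsQuasigeodesicZ K γ ∧
    ∀ (f : ℝ → X) (x y : X), IsGeodesicSegment f x y →
      (∀ t ∈ Set.Icc (0 : ℝ) (dist x y), K ≤ Metric.infDist (f t) (Set.range γ)) →
      EMetric.diam (projSetOf (Set.range γ) (f '' Set.Icc (0 : ℝ) (dist x y)))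
        < ENNReal.ofReal K

/-- The `ℤ`-orbit of the basepoint `o` under powers of `g`. -/
def zorbit {G X : Type*} [Group G] [MetricSpace X] [MulAction G X] (o : X) (g : G) : Set X :=
  Set.range fun i : ℤ => g ^ i • o

/-- `g` is a contracting isometry: its orbit map `i ↦ g^i • o` is a `K`-contracting axis
for some `K > 1`. -/
def IsContractingIsom {G X : Type*} [Group G] [MetricSpace X] [MulAction G X]
    (o : X) (g : G) : Prop :=
  ∃ K : ℝ, 1 < K ∧ IsContractingAxisZ K fun i : ℤ => g ^ i • o

/-- `g` and `h` are independent contracting isometries: both are contracting, and the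
nearest-point projections of each orbit to the other are bounded. -/
def IndependentPair {G X : Type*} [Group G] [MetricSpace X] [MulAction G X]
    (o : X) (g h : G) : Prop :=
  IsContractingIsom o g ∧ IsContractingIsom o h ∧
    Bornology.IsBounded (projSetOf (zorbit o g) (zorbit o h)) ∧
    Bornology.IsBounded (projSetOf (zorbit o h) (zorbit o g))

/-- `G` contains two independent contracting isometries of `X`. -/
def HasIndepContracting (G : Type*) {X : Type*} [Group G] [MetricSpace X] [MulAction G X]
    (o : X) : Prop :=
  ∃ g h : G, IndependentPair o g h

/-- `μ` is a probability measure on the countable group `G`. -/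
def IsProbMeasure {G : Type*} (μ : G → ℝ) : Prop :=
  (∀ g, 0 ≤ μ g) ∧ Summable μ ∧ ∑' g, μ g = 1

/-- Convolution of two (signed) measures on `G`. -/
noncomputable def conv {G : Type*} [Group G] (μ ν : G → ℝ) : G → ℝ :=
  fun g => ∑' h : G, μ h * ν (h⁻¹ * g)

/-- `n`-fold convolution power of `μ`, with `convPow μ 0` the point mass at the identity. -/
noncomputable def convPow {G : Type*} [Group G] (μ : G → ℝ) : ℕ → G → ℝ
  | 0 => ({1} : Set G).indicator fun _ => (1 : ℝ)
  | n + 1 => conv μ (convPow μ n)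

/-- `μ` is non-elementary: the sub-semigroup generated by its support contains
two independent contracting isometries. -/
def NonElementary {G X : Type*} [Group G] [MetricSpace X] [MulAction G X]
    (o : X) (μ : G → ℝ) : Prop :=
  ∃ g h : G, g ∈ Subsemigroup.closure {x : G | 0 < μ x} ∧
    h ∈ Subsemigroup.closure {x : G | 0 < μ x} ∧ IndependentPair o g h

open Classical in
/-- Weight of a tuple `(g₁,…,g_k)` where `g₁ = a`, `g_j = b`, `g_k = c` are fixed
(point masses) and `g_i` has law `ν i` for the remaining indices. -/
noncomputable def tupleWeight {G : Type*} [Group G] (k j : ℕ) (a b c : G)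
    (ν : ℕ → G → ℝ) (x : Fin k → G) : ℝ :=
  ∏ i : Fin k,
    if (i : ℕ) + 1 = 1 then (if x i = a then (1 : ℝ) else 0)
    else if (i : ℕ) + 1 = j then (if x i = b then (1 : ℝ) else 0)
    else if (i : ℕ) + 1 = k then (if x i = c then (1 : ℝ) else 0)
    else ν ((i : ℕ) + 1) (x i)

/-- The event: there exists `1 < l < k` such that `(g₁⋯g_l)·o` is `K`-close to every
geodesic from `o` to `(g₁⋯g_k)·o`. -/
def CloseEvent {G X : Type*} [Group G] [MetricSpace X] [MulAction G X]
    (o : X) (K : ℝ) {k : ℕ} (x : Fin k → G) : Prop :=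
  ∃ l : ℕ, 1 < l ∧ l < k ∧
    ∀ f : ℝ → X, IsGeodesicSegment f o ((List.ofFn x).prod • o) →
      Metric.infDist (((List.ofFn x).take l).prod • o)
        (f '' Set.Icc (0 : ℝ) (dist o ((List.ofFn x).prod • o))) < K

/-!
If `g`, `h` are independent, the axis of `g` and its translates by powers of `h` are contracting
sets with uniformly bounded projections to one another, so by the Behrstock inequality a point
projects far from the marked point of at most one of them. This gives four words `w t` in the
support of `μ`, of one common length `N`, such that an incoming and an outgoing endpoint each veto
at most one `t`, while for every other `t` a geodesic between them has to pass close to the end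
of `w t`.

Cut the longer of the two free runs of indices into `M ≥ k / (5 * N) - 1` blocks of length `N`. If
no intermediate point is close to the geodesic, each block that spells some `w t` has `t` vetoed by
the part of the path before it or by the part after it. The prefix vetoes are adapted to the
filtration read from the left and the suffix vetoes to the one read from the right, so each side
carries a multiplicative supermartingale of mean at most `(1 - σ) ^ M`. The product of the two is at
least `1` on the bad event, hence so is their sum, and the bad event has probability at most
`2 * (1 - σ) ^ M`.
-/

section ContractingSets

theorem exists_first_le_of_continuousOn {φ : ℝ → ℝ} {a b K : ℝ}
    (hφ : ContinuousOn φ (Set.Icc a b)) (ha : K ≤ φ a) (h : ∃ t ∈ Set.Icc a b, φ t ≤ K) :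
    ∃ t ∈ Set.Icc a b, φ t = K ∧ ∀ s ∈ Set.Icc a t, K ≤ φ s := by
  have hit : ∀ t ∈ Set.Icc a b, φ t ≤ K → ∃ r ∈ Set.Icc a t, φ r = K := fun t ht hle =>
    intermediate_value_Icc' ht.1 (hφ.mono (Set.Icc_subset_Icc_right ht.2)) ⟨hle, ha⟩
  have hcompact : IsCompact (Set.Icc a b ∩ φ ⁻¹' {K}) :=
    isCompact_Icc.of_isClosed_subset
      (hφ.preimage_isClosed_of_isClosed isClosed_Icc isClosed_singleton) Set.inter_subset_left
  obtain ⟨t, ht, hle⟩ := h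
  obtain ⟨r, hr, hrK⟩ := hit t ht hle
  obtain ⟨t₀, ⟨ht₀, hK⟩, hmin⟩ :=
    hcompact.exists_isLeast ⟨r, ⟨hr.1, hr.2.trans ht.2⟩, hrK⟩
  refine ⟨t₀, ht₀, hK, fun s hs => ?_⟩
  by_contra! hlt
  obtain ⟨r', hr', hrK'⟩ := hit s ⟨hs.1, hs.2.trans ht₀.2⟩ hlt.le
  have hle' : t₀ ≤ r' := hmin ⟨⟨hr'.1, hr'.2.trans (hs.2.trans ht₀.2)⟩, hrK'⟩
  have hst : s = t₀ := le_antisymm hs.2 (hle'.trans hr'.2)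
  exact hlt.ne (hst ▸ hK)

variable {X : Type*} [MetricSpace X]

namespace IsGeodesicSegment

variable {f : ℝ → X} {x y : X} {s : ℝ}

theorem dist_left (hf : IsGeodesicSegment f x y) (hs : s ∈ Set.Icc 0 (dist x y)) :
    dist x (f s) = s := by
  have h := hf.2.2 0 ⟨le_rfl, dist_nonneg⟩ s hs
  rwa [hf.1, zero_sub, abs_neg, abs_of_nonneg hs.1] at h

theorem dist_right (hf : IsGeodesicSegment f x y) (hs : s ∈ Set.Icc 0 (dist x y)) :
    dist (f s) y = dist x y - s := by
  have h := hf.2.2 s hs (dist x y) ⟨dist_nonneg, le_rfl⟩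
  rwa [hf.2.1, abs_sub_comm, abs_of_nonneg (sub_nonneg.2 hs.2)] at h

theorem restrict (hf : IsGeodesicSegment f x y) (hs : s ∈ Set.Icc 0 (dist x y)) :
    IsGeodesicSegment f x (f s) := by
  refine ⟨hf.1, by rw [hf.dist_left hs], ?_⟩
  rw [hf.dist_left hs]
  exact fun a ha b hb => hf.2.2 a ⟨ha.1, ha.2.trans hs.2⟩ b ⟨hb.1, hb.2.trans hs.2⟩

theorem continuousOn (hf : IsGeodesicSegment f x y) :
    ContinuousOn f (Set.Icc 0 (dist x y)) := by
  refine (LipschitzOnWith.of_dist_le_mul (K := 1) fun s hs t ht => ?_).continuousOn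
  rw [hf.2.2 s hs t ht, NNReal.coe_one, one_mul, Real.dist_eq]

theorem smul {G : Type*} [Group G] [MulAction G X] [IsIsometricSMul G X]
    (hf : IsGeodesicSegment f x y) (u : G) :
    IsGeodesicSegment (fun t => u • f t) (u • x) (u • y) := by
  simp only [IsGeodesicSegment, dist_smul]
  exact ⟨congrArg (u • ·) hf.1, congrArg (u • ·) hf.2.1, hf.2.2⟩

end IsGeodesicSegment

theorem mem_projSet_of_dist_add_eq {A : Set X} {x z p : X} (hp : p ∈ projSet A x)
    (h : dist x z + dist z p = dist x p) : p ∈ projSet A z := by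
  refine ⟨hp.1, le_antisymm ?_ (Metric.infDist_le_dist_of_mem hp.1)⟩
  have hxz : Metric.infDist x A ≤ Metric.infDist z A + dist x z :=
    Metric.infDist_le_infDist_add_dist
  linarith [hp.2]

theorem smul_mem_projSet {G : Type*} [Group G] [MulAction G X] [IsIsometricSMul G X] (u : G)
    {A : Set X} {x p : X} (hp : p ∈ projSet A x) : u • p ∈ projSet (u • A) (u • x) := by
  refine ⟨Set.smul_mem_smul_set hp.1, ?_⟩
  rw [dist_smul, hp.2]
  exact (Metric.infDist_image (isometry_smul X u)).symm

/-- A `K`-contracting set: nearest-point projections to `A` exist, and the two endpoints of a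
geodesic that stays `K`-far from `A` project `K`-close to each other. Existence of projections is
part of the notion because the ambient space need not be proper. -/
structure IsContractingSet (K : ℝ) (A : Set X) : Prop where
  pos : 0 < K
  nonempty_projSet : ∀ x, (projSet A x).Nonempty
  dist_proj_le : ∀ (f : ℝ → X) (x y : X), IsGeodesicSegment f x y →
    (∀ t ∈ Set.Icc (0 : ℝ) (dist x y), K ≤ Metric.infDist (f t) A) →
    ∀ p ∈ projSet A x, ∀ q ∈ projSet A y, dist p q ≤ K

namespace IsContractingSet

variable {K : ℝ} {A : Set X}

-- The geodesic enters the `K`-neighbourhood of `A` at a point whose projection is close to `p`.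
theorem exists_dist_le_of_lt_dist_proj (hA : IsContractingSet K A) {f : ℝ → X} {x y p q : X}
    (hf : IsGeodesicSegment f x y) (hp : p ∈ projSet A x) (hq : q ∈ projSet A y)
    (hpq : K < dist p q) : ∃ t ∈ Set.Icc 0 (dist x y), dist p (f t) ≤ 2 * K := by
  by_cases hx : Metric.infDist x A ≤ K
  · refine ⟨0, ⟨le_rfl, dist_nonneg⟩, ?_⟩
    rw [hf.1, dist_comm, hp.2]
    linarith [hA.pos]
  have hclose : ∃ t ∈ Set.Icc 0 (dist x y), Metric.infDist (f t) A ≤ K := by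
    by_contra! hfar
    exact hpq.not_ge (hA.dist_proj_le f x y hf (fun t ht => (hfar t ht).le) p hp q hq)
  obtain ⟨t, ht, hentry, hfar⟩ := exists_first_le_of_continuousOn
    (φ := fun t => Metric.infDist (f t) A)
    ((Metric.continuous_infDist_pt A).comp_continuousOn hf.continuousOn)
    (by simpa only [hf.1] using (not_le.1 hx).le) hclose
  obtain ⟨r, hr⟩ := hA.nonempty_projSet (f t)
  have hpr : dist p r ≤ K :=
    hA.dist_proj_le f x (f t) (hf.restrict ht) (by rwa [hf.dist_left ht]) p hp r hr
  have hrt : dist r (f t) = K := by rw [dist_comm, hr.2, hentry]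
  exact ⟨t, ht, by linarith [dist_triangle p r (f t)]⟩

theorem dist_proj_le_of_dist (hA : IsContractingSet K A) (hgeo : IsGeodesicSpace X) {x y p q : X}
    (hp : p ∈ projSet A x) (hq : q ∈ projSet A y) : dist p q ≤ 3 * dist x y + 2 * K := by
  obtain ⟨f, hf⟩ := hgeo x y
  by_cases hfar : ∀ t ∈ Set.Icc 0 (dist x y), K ≤ Metric.infDist (f t) A
  · linarith [hA.dist_proj_le f x y hf hfar p hp q hq, hA.pos, dist_nonneg (x := x) (y := y)]
  push Not at hfar
  obtain ⟨t, ht, hlt⟩ := hfar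
  have hx : Metric.infDist x A ≤ Metric.infDist (f t) A + dist x (f t) :=
    Metric.infDist_le_infDist_add_dist
  have hy : Metric.infDist y A ≤ Metric.infDist (f t) A + dist y (f t) :=
    Metric.infDist_le_infDist_add_dist
  rw [← hp.2, hf.dist_left ht, dist_comm x p] at hx
  rw [← hq.2, dist_comm y (f t), hf.dist_right ht] at hy
  linarith [dist_triangle4 p x y q, dist_nonneg (x := x) (y := y)]

/-- The Behrstock inequality. -/
theorem dist_proj_proj_le {L : ℝ} {H : Set X} (hA : IsContractingSet K A)
    (hH : IsContractingSet L H) (hgeo : IsGeodesicSpace X) {x p q p' q' : X}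
    (hp : p ∈ projSet A x) (hq : q ∈ projSet H x) (hq' : q' ∈ projSet H p)
    (hp' : p' ∈ projSet A q) (hlt : L < dist q q') : dist p p' ≤ 6 * L + 2 * K := by
  obtain ⟨f, hf⟩ := hgeo x p
  obtain ⟨t, ht, hclose⟩ := hH.exists_dist_le_of_lt_dist_proj hf hq hq' hlt
  have hpt : p ∈ projSet A (f t) := mem_projSet_of_dist_add_eq hp <| by
    rw [hf.dist_left ht, hf.dist_right ht, add_sub_cancel]
  rw [dist_comm] at hclose
  linarith [hA.dist_proj_le_of_dist hgeo hpt hp']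

theorem smul {G : Type*} [Group G] [MulAction G X] [IsIsometricSMul G X]
    (hA : IsContractingSet K A) (u : G) : IsContractingSet K (u • A) where
  pos := hA.pos
  nonempty_projSet x := by
    obtain ⟨p, hp⟩ := hA.nonempty_projSet (u⁻¹ • x)
    exact ⟨u • p, by simpa using smul_mem_projSet u hp⟩
  dist_proj_le f x y hf hfar p hp q hq := by
    have hfar' : ∀ t ∈ Set.Icc 0 (dist (u⁻¹ • x) (u⁻¹ • y)),
        K ≤ Metric.infDist (u⁻¹ • f t) A := by
      intro t ht
      rw [dist_smul] at ht
      have h := Metric.infDist_image (isometry_smul X u) (t := A) (x := u⁻¹ • f t)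
      rw [smul_inv_smul] at h
      exact h ▸ hfar t ht
    rw [← dist_smul u⁻¹]
    exact hA.dist_proj_le _ _ _ (hf.smul u⁻¹) hfar' _ (by simpa using smul_mem_projSet u⁻¹ hp)
      _ (by simpa using smul_mem_projSet u⁻¹ hq)

end IsContractingSet

/-- The indices `i` for which some projection of `x` to `A i` is more than `D` away from the
marked point `c i`. -/
def farIndices {ι : Type*} (A : ι → Set X) (c : ι → X) (D : ℝ) (x : X) : Set ι :=
  {i | ∃ a ∈ projSet (A i) x, D < dist a (c i)}

theorem subsingleton_farIndices {ι : Type*} {A : ι → Set X} {c : ι → X} {K R : ℝ}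
    (hgeo : IsGeodesicSpace X) (hA : ∀ i, IsContractingSet K (A i))
    (hR : ∀ i j, i ≠ j → ∀ y ∈ A j, ∀ a ∈ projSet (A i) y, dist a (c i) ≤ R) (x : X) :
    (farIndices A c (8 * K + R) x).Subsingleton := by
  rintro i ⟨p, hp, hpc⟩ j ⟨q, hq, hqc⟩
  by_contra hij
  obtain ⟨q', hq'⟩ := (hA j).nonempty_projSet p
  obtain ⟨p', hp'⟩ := (hA i).nonempty_projSet q
  have hqj := hR j i (Ne.symm hij) p hp.1 q' hq'
  have hpi := hR i j hij q hq.1 p' hp'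
  have hK := (hA i).pos
  have hlt : K < dist q q' := by linarith [dist_triangle q q' (c j)]
  linarith [(hA i).dist_proj_proj_le (hA j) hgeo hp hq hq' hp' hlt, dist_triangle p p' (c i)]

end ContractingSets

section ContractingIsometries

variable {X : Type*} [MetricSpace X] {K : ℝ} {γ : ℤ → X}

theorem IsQuasigeodesicZ.tendsto_dist_cofinite (hγ : IsQuasigeodesicZ K γ) (hK : 0 < K) (x : X) :
    Tendsto (fun i => dist x (γ i)) cofinite atTop := by
  have habs : Tendsto (fun i : ℤ => |(i : ℝ)|) cofinite atTop :=
    tendsto_norm_cocompact_atTop.comp Int.tendsto_coe_cofinite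
  refine tendsto_atTop_mono (fun i => ?_) <| tendsto_atTop_add_const_right _
    (-K - dist (γ 0) x) (habs.atTop_div_const hK)
  have h := (hγ 0 i).1
  rw [Int.cast_zero, zero_sub, abs_neg] at h
  linarith [dist_triangle (γ 0) x (γ i)]

theorem IsContractingAxisZ.isContractingSet (hγ : IsContractingAxisZ K γ) (hK : 0 < K) :
    IsContractingSet K (Set.range γ) where
  pos := hK
  nonempty_projSet x := by
    obtain ⟨i, hi⟩ := (hγ.1.tendsto_dist_cofinite hK x).exists_forall_le
    refine ⟨γ i, ⟨i, rfl⟩, le_antisymm ?_ (Metric.infDist_le_dist_of_mem ⟨i, rfl⟩)⟩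
    exact (Metric.le_infDist (Set.range_nonempty γ)).2 (Set.forall_mem_range.2 hi)
  dist_proj_le f x y hf hfar p hp q hq := by
    have hp' : p ∈ projSetOf (Set.range γ) (f '' Set.Icc 0 (dist x y)) :=
      Set.mem_biUnion ⟨0, ⟨le_rfl, dist_nonneg⟩, hf.1⟩ hp
    have hq' : q ∈ projSetOf (Set.range γ) (f '' Set.Icc 0 (dist x y)) :=
      Set.mem_biUnion ⟨dist x y, ⟨dist_nonneg, le_rfl⟩, hf.2.1⟩ hq
    have hlt := (Metric.edist_le_ediam_of_mem hp' hq').trans_lt (hγ.2 f x y hf hfar)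
    rw [edist_dist] at hlt
    exact (ENNReal.ofReal_lt_ofReal_iff hK).1 hlt |>.le

variable {G : Type*} [Group G] [MulAction G X] {o : X} {g h : G}

theorem zpow_smul_zorbit (o : X) (g : G) (n : ℤ) : g ^ n • zorbit o g = zorbit o g := by
  rw [zorbit, ← Set.image_smul, ← Set.range_comp]
  conv_rhs => rw [← (Equiv.addLeft n).surjective.range_comp]
  simp only [Function.comp_def, Equiv.coe_addLeft, zpow_add, mul_smul]

theorem IsContractingIsom.exists_isContractingSet (hg : IsContractingIsom o g) :
    ∃ K, IsContractingSet K (zorbit o g) := by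
  obtain ⟨K, hK, hγ⟩ := hg
  exact ⟨K, hγ.isContractingSet (one_pos.trans hK)⟩

theorem IsContractingIsom.exists_forall_lt_dist_zpow (hg : IsContractingIsom o g) (R : ℝ) :
    ∃ L : ℕ, ∀ i : ℤ, (L : ℤ) ≤ |i| → R < dist o (g ^ i • o) := by
  obtain ⟨K, hK, hγ, -⟩ := hg
  have hfin : {i : ℤ | ¬R < dist o (g ^ i • o)}.Finite :=
    (hγ.tendsto_dist_cofinite (one_pos.trans hK) o).eventually_gt_atTop R
  obtain ⟨L, hL⟩ := (hfin.image Int.natAbs).bddAbove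
  refine ⟨L + 1, fun i hi => ?_⟩
  by_contra hlt
  have hle : i.natAbs ≤ L := hL (Set.mem_image_of_mem _ hlt)
  rw [Int.abs_eq_natAbs] at hi
  omega

variable [IsIsometricSMul G X]

-- Far along the axis of `h`, a translate of the axis of `g` projects far from the projection of
-- the axis of `g`, so the Behrstock inequality applies.
theorem IndependentPair.exists_dist_proj_translate_le (hgh : IndependentPair o g h)
    (hgeo : IsGeodesicSpace X) :
    ∃ (L : ℕ) (R : ℝ), ∀ i : ℤ, (L : ℤ) ≤ |i| → ∀ y ∈ h ^ i • zorbit o g,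
      ∀ a ∈ projSet (zorbit o g) y, dist a o ≤ R := by
  obtain ⟨hg, hh, hbg, hbh⟩ := hgh
  obtain ⟨Kg, hA⟩ := hg.exists_isContractingSet
  obtain ⟨Kh, hH⟩ := hh.exists_isContractingSet
  obtain ⟨rg, hrg⟩ := hbg.subset_closedBall o
  obtain ⟨rh, hrh⟩ := hbh.subset_closedBall o
  obtain ⟨L, hL⟩ := hh.exists_forall_lt_dist_zpow (Kh + 2 * rh)
  refine ⟨L, 6 * Kh + 2 * Kg + rg, ?_⟩
  rintro i hi _ ⟨y, hy, rfl⟩ a ha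
  obtain ⟨q, hq⟩ := hH.nonempty_projSet y
  have hhq : h ^ i • q ∈ projSet (zorbit o h) (h ^ i • y) := by
    simpa only [zpow_smul_zorbit] using smul_mem_projSet (h ^ i) hq
  obtain ⟨q', hq'⟩ := hH.nonempty_projSet a
  obtain ⟨a', ha'⟩ := hA.nonempty_projSet (h ^ i • q)
  have hqo : dist q o ≤ rh := hrh (Set.mem_biUnion hy hq)
  have hqo' : dist q' o ≤ rh := hrh (Set.mem_biUnion ha.1 hq')
  have hao' : dist a' o ≤ rg := hrg (Set.mem_biUnion hhq.1 ha')
  have hlt : Kh < dist (h ^ i • q) q' := by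
    have htri := dist_triangle4 (h ^ i • o) (h ^ i • q) q' o
    rw [dist_smul, dist_comm o q, dist_comm (h ^ i • o) o] at htri
    linarith [hL i hi]
  linarith [hA.dist_proj_proj_le hH hgeo ha hhq hq' ha' hlt, dist_triangle a a' o]

theorem IndependentPair.exists_dist_proj_translates_le (hgh : IndependentPair o g h)
    (hgeo : IsGeodesicSpace X) :
    ∃ (L : ℕ) (R : ℝ), ∀ i j : ℤ, (L : ℤ) ≤ |i - j| → ∀ y ∈ h ^ j • zorbit o g,
      ∀ a ∈ projSet (h ^ i • zorbit o g) y, dist a (h ^ i • o) ≤ R := by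
  obtain ⟨L, R, hR⟩ := hgh.exists_dist_proj_translate_le hgeo
  refine ⟨L, R, fun i j hij y hy a ha => ?_⟩
  have hy' : h ^ (-i) • y ∈ h ^ (j - i) • zorbit o g := by
    rw [sub_eq_neg_add, zpow_add, mul_smul]
    exact Set.smul_mem_smul_set hy
  have ha' : h ^ (-i) • a ∈ projSet (zorbit o g) (h ^ (-i) • y) := by
    simpa using smul_mem_projSet (h ^ (-i)) ha
  have hle := hR (j - i) (by rwa [abs_sub_comm]) _ hy' _ ha'
  rwa [← dist_smul (h ^ i), smul_smul, ← zpow_add, add_neg_cancel, zpow_zero, one_smul] at hle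

end ContractingIsometries

section Schottky

variable {G X : Type*} [Group G] [MetricSpace X] [MulAction G X]

/-- A Schottky family: every geodesic from an incoming endpoint `x` to an outgoing endpoint
`s t • z` passes `K`-close to `s t • o`, unless `t` is vetoed by `x` or by `z`; the vetoes `b x` and
`b' z` contain at most one index each. -/
structure IsSchottky {ι : Type*} (o : X) (K : ℝ) (s : ι → G) (b b' : X → Set ι) : Prop where
  injective : Function.Injective s
  subsingleton_left : ∀ x, (b x).Subsingleton
  subsingleton_right : ∀ z, (b' z).Subsingleton
  near : ∀ x z t, t ∉ b x → t ∉ b' z → ∀ f, IsGeodesicSegment f x (s t • z) →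
    ∃ τ ∈ Set.Icc 0 (dist x (s t • z)), dist (f τ) (s t • o) < K

theorem IsSchottky.mono {ι : Type*} {o : X} {K K' : ℝ} {s : ι → G} {b b' : X → Set ι}
    (hs : IsSchottky o K s b b') (hK : K ≤ K') : IsSchottky o K' s b b' where
  __ := hs
  near x z t hx hz f hf :=
    (hs.near x z t hx hz f hf).imp fun _ h => ⟨h.1, h.2.trans_le hK⟩

variable [IsIsometricSMul G X] {A : Set X} {K D : ℝ} {g u : G} {o c x z : X}

theorem mul_mul_smul_mem_projSet (hg : g • A = A) (hc : c ∈ projSet (u⁻¹ • A) z) :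
    (u * g * u) • c ∈ projSet (u • A) ((u * g * u) • z) := by
  have h := smul_mem_projSet (u * g * u) hc
  rwa [smul_smul (u * g * u), mul_inv_cancel_right, mul_smul, hg] at h

theorem lt_dist_mul_mul_smul (hlong : K + 2 * D < dist o (g • o))
    (hc : dist c (u⁻¹ • o) ≤ D) : K + D < dist ((u * g * u) • c) (u • o) := by
  rw [mul_smul, mul_smul, dist_smul]
  rw [← dist_smul u, smul_inv_smul, ← dist_smul g] at hc
  linarith [dist_triangle_left o (g • o) (g • u • c)]

-- `x` and `(u * g * u) • z` project near the two ends of the long segment from `u • o` to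
-- `(u * g) • o` of the contracting set `u • A`.
theorem IsContractingSet.exists_dist_mul_mul_smul_le (hA : IsContractingSet K A)
    (hg : g • A = A) (hlong : K + 2 * D < dist o (g • o))
    (hx : ∀ a ∈ projSet (u • A) x, dist a (u • o) ≤ D)
    (hz : ∀ a ∈ projSet (u⁻¹ • A) z, dist a (u⁻¹ • o) ≤ D)
    {f : ℝ → X} (hf : IsGeodesicSegment f x ((u * g * u) • z)) :
    ∃ τ ∈ Set.Icc 0 (dist x ((u * g * u) • z)),
      dist (f τ) ((u * g * u) • o) ≤ 2 * K + D + dist o (g • u • o) := by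
  obtain ⟨a, ha⟩ := (hA.smul u).nonempty_projSet x
  obtain ⟨c, hc⟩ := (hA.smul u⁻¹).nonempty_projSet z
  have hac : K < dist a ((u * g * u) • c) := by
    linarith [lt_dist_mul_mul_smul hlong (hz c hc), hx a ha,
      dist_triangle_left ((u * g * u) • c) (u • o) a]
  obtain ⟨τ, hτ, hle⟩ := (hA.smul u).exists_dist_le_of_lt_dist_proj hf ha
    (mul_mul_smul_mem_projSet hg hc) hac
  refine ⟨τ, hτ, ?_⟩
  have hend : dist (u • o) ((u * g * u) • o) = dist o (g • u • o) := by
    rw [mul_smul, mul_smul, dist_smul]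
  rw [dist_comm] at hle
  linarith [dist_triangle4 (f τ) a (u • o) ((u * g * u) • o), hx a ha]

theorem IndependentPair.exists_isSchottky {h : G} (hgh : IndependentPair o g h)
    (hgeo : IsGeodesicSpace X) (ι : Type*) [Finite ι] :
    ∃ L n₀ : ℕ, ∀ m n : ι → ℕ, (∀ t, L ≤ m t) →
      (∀ s t, s ≠ t → (L : ℤ) ≤ |(m s : ℤ) - m t|) → (∀ t, n₀ ≤ n t) →
      ∃ K b b', IsSchottky o K (fun t => h ^ m t * g ^ n t * h ^ m t) b b' := by
  obtain ⟨K, hA⟩ := hgh.1.exists_isContractingSet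
  obtain ⟨L, R, hR⟩ := hgh.exists_dist_proj_translates_le hgeo
  set D := 8 * K + R with hD
  obtain ⟨n₀, hn₀⟩ := hgh.1.exists_forall_lt_dist_zpow (K + 2 * D)
  refine ⟨L, n₀, fun m n hmL hm hn => ?_⟩
  set A := zorbit o g
  have hgA : ∀ t, g ^ n t • A = A := fun t => mod_cast zpow_smul_zorbit o g (n t)
  have hlong : ∀ t, K + 2 * D < dist o (g ^ n t • o) := fun t => by
    simpa using hn₀ (n t) (by simpa using hn t)
  let b : X → Set ι := farIndices (fun t => h ^ m t • A) (fun t => h ^ m t • o) D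
  let b' : X → Set ι := farIndices (fun t => (h ^ m t)⁻¹ • A) (fun t => (h ^ m t)⁻¹ • o) D
  have hb : ∀ x, (b x).Subsingleton := subsingleton_farIndices hgeo (fun t => hA.smul _)
    fun s t hst => by simpa only [zpow_natCast] using hR (m s) (m t) (hm s t hst)
  have hb' : ∀ x, (b' x).Subsingleton := subsingleton_farIndices hgeo (fun t => hA.smul _)
    fun s t hst => by
      simpa only [zpow_neg, zpow_natCast] using
        hR (-m s) (-m t) (by rw [neg_sub_neg]; exact hm t s hst.symm)
  have hcenter : ∀ t, t ∈ b ((h ^ m t * g ^ n t * h ^ m t) • o) := by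
    intro t
    obtain ⟨c, hc⟩ := (hA.smul (h ^ m t)⁻¹).nonempty_projSet o
    have hcR : dist c ((h ^ m t)⁻¹ • o) ≤ R := by
      have ho : o ∈ h ^ (0 : ℤ) • zorbit o g := by simpa using ⟨0, by simp⟩
      simpa using hR (-m t) 0 (by simpa using hmL t) o ho c (by simpa using hc)
    refine ⟨_, mul_mul_smul_mem_projSet (hgA t) hc, ?_⟩
    linarith [lt_dist_mul_mul_smul (hlong t) (hcR.trans (by linarith [hD, hA.pos])), hA.pos]
  obtain ⟨C, hC⟩ := (Set.finite_range fun t => dist o (g ^ n t • h ^ m t • o)).bddAbove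
  refine ⟨2 * K + D + C + 1, b, b', fun s t hst => ?_, hb, hb', fun x z t hx hz f hf => ?_⟩
  · exact hb _ (hcenter s) (hst ▸ hcenter t)
  · simp only [b, b', farIndices, Set.mem_ofPred_eq, not_exists, not_and, not_lt] at hx hz
    obtain ⟨τ, hτ, hle⟩ := hA.exists_dist_mul_mul_smul_le (hgA t) (hlong t) hx hz hf
    exact ⟨τ, hτ, by linarith [hC (Set.mem_range_self t)]⟩

end Schottky

section Words

variable {G X : Type*} [Group G] [MetricSpace X] [MulAction G X] {o : X} {K : ℝ}

theorem exists_list_of_mem_subsemigroupClosure {M : Type*} [Monoid M] {s : Set M} {x : M}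
    (hx : x ∈ Subsemigroup.closure s) :
    ∃ l : List M, l ≠ [] ∧ (∀ y ∈ l, y ∈ s) ∧ l.prod = x := by
  induction hx using Subsemigroup.closure_induction with
  | mem x hx => exact ⟨[x], by simp, by simpa using hx, by simp⟩
  | mul x y _ _ ihx ihy =>
    obtain ⟨l, hl, hls, rfl⟩ := ihx
    obtain ⟨l', -, hls', rfl⟩ := ihy
    exact ⟨l ++ l', by simp [hl], fun y hy => (List.mem_append.1 hy).elim (hls y) (hls' y),
      List.prod_append⟩

theorem NonElementary.exists_isSchottky [IsIsometricSMul G X] {μ : G → ℝ}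
    (hμ : NonElementary o μ) (hgeo : IsGeodesicSpace X) :
    ∃ (K : ℝ) (N : ℕ) (w : Fin 4 → List G) (b b' : X → Set (Fin 4)), 0 < N ∧
      (∀ t, (w t).length = N) ∧ (∀ t, ∀ a ∈ w t, 0 < μ a) ∧
      IsSchottky o K (fun t => (w t).prod) b b' := by
  obtain ⟨_, _, hg, hh, hgh⟩ := hμ
  obtain ⟨u, hu, huμ, rfl⟩ := exists_list_of_mem_subsemigroupClosure hg
  obtain ⟨v, -, hvμ, rfl⟩ := exists_list_of_mem_subsemigroupClosure hh
  obtain ⟨L, n₀, hL⟩ := hgh.exists_isSchottky hgeo (Fin 4)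
  have hp : 0 < u.length := List.length_pos_of_ne_nil hu
  set p := u.length
  set q := v.length
  -- The exponents are chosen so that all four words have the same length.
  let m : Fin 4 → ℕ := fun t => (t + 1) * (L * p)
  let n : Fin 4 → ℕ := fun t => n₀ + 1 + 2 * t.rev * (L * q)
  have hLp : L ≤ L * p := Nat.le_mul_of_pos_right L hp
  have hm : ∀ s t, s ≠ t → (L : ℤ) ≤ |(m s : ℤ) - m t| := by
    intro s t hst
    have hsub : (m s : ℤ) - m t = ((s : ℤ) - t) * (L * p : ℕ) := by simp only [m]; push_cast; ring
    rw [hsub, abs_mul, Nat.abs_cast]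
    have hone : 1 ≤ |(s : ℤ) - t| := Int.one_le_abs (by omega)
    exact (Int.ofNat_le.2 hLp).trans (le_mul_of_one_le_left (Int.natCast_nonneg _) hone)
  obtain ⟨K, b, b', hs⟩ := hL m n (fun t => hLp.trans (Nat.le_mul_of_pos_left _ t.1.succ_pos)) hm
    (fun t => by simp only [n]; omega)
  let w : Fin 4 → List G := fun t => (List.replicate (m t) v).flatten ++
    (List.replicate (n t) u).flatten ++ (List.replicate (m t) v).flatten
  refine ⟨K, (n₀ + 1) * p + 8 * (L * p * q), w, b, b', by positivity, fun t => ?_, ?_, ?_⟩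
  · have hrev : (t : ℕ) + 1 + t.rev = 4 := by rw [Fin.val_rev]; omega
    calc (w t).length = (n₀ + 1) * p + 2 * ((t : ℕ) + 1 + t.rev) * (L * p * q) := by
          simp only [w, m, n, List.length_append, List.length_flatten, List.map_replicate,
            List.sum_replicate, smul_eq_mul]
          ring
      _ = (n₀ + 1) * p + 8 * (L * p * q) := by rw [hrev]
  · intro t a ha
    simp only [w, List.mem_append, List.mem_flatten, List.mem_replicate] at ha
    grind
  · simpa [w, List.prod_flatten, mul_assoc] using hs

theorem closeEvent_get_append {u v : List G} (hu : 1 < u.length) (hv : v ≠ [])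
    (h : ∀ f, IsGeodesicSegment f o ((u ++ v).prod • o) →
      ∃ τ ∈ Set.Icc 0 (dist o ((u ++ v).prod • o)), dist (f τ) (u.prod • o) < K) :
    CloseEvent o K (u ++ v).get := by
  refine ⟨u.length, hu, by simpa using List.length_pos_of_ne_nil hv, fun f hf => ?_⟩
  rw [List.ofFn_get] at hf ⊢
  obtain ⟨τ, hτ, hlt⟩ := h f hf
  rw [List.take_left, dist_comm] at *
  exact (Metric.infDist_le_dist_of_mem (Set.mem_image_of_mem f hτ)).trans_lt hlt

theorem IsSchottky.closeEvent [IsIsometricSMul G X] {ι : Type*} {s : ι → G} {b b' : X → Set ι}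
    (hs : IsSchottky o K s b b') {P w Q : List G} {t : ι} (hw : w.prod = s t)
    (hlen : 1 < (P ++ w).length) (hQ : Q ≠ []) (hb : t ∉ b (P.prod⁻¹ • o))
    (hb' : t ∉ b' (Q.prod • o)) : CloseEvent o K (P ++ w ++ Q).get := by
  refine closeEvent_get_append hlen hQ fun f hf => ?_
  have hend : P.prod⁻¹ • (P ++ w ++ Q).prod • o = s t • Q.prod • o := by
    simp [hw, mul_smul]
  have hf' := hf.smul P.prod⁻¹
  rw [hend] at hf'
  obtain ⟨τ, hτ, hlt⟩ := hs.near _ _ t hb hb' _ hf'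
  rw [← hend, dist_smul] at hτ
  refine ⟨τ, hτ, ?_⟩
  rwa [← dist_smul P.prod, smul_inv_smul, smul_smul, ← hw, ← List.prod_append] at hlt

end Words

section RandomWords

open scoped ENNReal

variable {α β : Type*}

/-- The expectation of an `[0, ∞]`-valued function under a probability mass function. As a sum it
needs no measurable structure and makes sense on uncountable types; probabilities of events are
expectations of indicators. -/
noncomputable def expectation (p : PMF α) (f : α → ℝ≥0∞) : ℝ≥0∞ :=
  ∑' a, p a * f a

theorem expectation_mono {p : PMF α} {f g : α → ℝ≥0∞} (h : ∀ a, p a ≠ 0 → f a ≤ g a) :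
    expectation p f ≤ expectation p g := by
  refine ENNReal.tsum_le_tsum fun a => ?_
  by_cases ha : p a = 0
  · simp [ha]
  · exact mul_le_mul_right (h a ha) (p a)

theorem expectation_add (p : PMF α) (f g : α → ℝ≥0∞) :
    expectation p (fun a => f a + g a) = expectation p f + expectation p g := by
  simp only [expectation, mul_add, ENNReal.tsum_add]

theorem expectation_mul_const (p : PMF α) (f : α → ℝ≥0∞) (c : ℝ≥0∞) :
    expectation p (fun a => f a * c) = expectation p f * c := by
  simp only [expectation, ← mul_assoc, ENNReal.tsum_mul_right]

theorem expectation_const_mul (p : PMF α) (f : α → ℝ≥0∞) (c : ℝ≥0∞) :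
    expectation p (fun a => c * f a) = c * expectation p f := by
  simp only [expectation, mul_left_comm _ c, ENNReal.tsum_mul_left]

theorem expectation_le_of_forall_le {p : PMF α} {f : α → ℝ≥0∞} {c : ℝ≥0∞}
    (h : ∀ a, p a ≠ 0 → f a ≤ c) : expectation p f ≤ c := by
  refine (expectation_mono h).trans_eq ?_
  rw [expectation, ENNReal.tsum_mul_right, p.tsum_coe, one_mul]

theorem expectation_comm (p : PMF α) (q : PMF β) (f : α → β → ℝ≥0∞) :
    expectation p (fun a => expectation q (f a)) =
      expectation q fun b => expectation p fun a => f a b := by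
  simp only [expectation, ← ENNReal.tsum_mul_left, mul_left_comm]
  exact ENNReal.tsum_comm

theorem expectation_pure (a : α) (f : α → ℝ≥0∞) : expectation (PMF.pure a) f = f a := by
  rw [expectation, tsum_eq_single a fun b hb => by simp [PMF.pure_apply, hb]]
  simp

theorem expectation_bind (p : PMF α) (q : α → PMF β) (f : β → ℝ≥0∞) :
    expectation (p.bind q) f = expectation p fun a => expectation (q a) f := by
  simp only [expectation, PMF.bind_apply, ← ENNReal.tsum_mul_left, ← ENNReal.tsum_mul_right,
    mul_assoc]
  exact ENNReal.tsum_comm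

/-- The law of a word of independent letters with the given laws. -/
noncomputable def randomWord : List (PMF α) → PMF (List α)
  | [] => PMF.pure []
  | p :: L => p.bind fun a => (randomWord L).bind fun w => PMF.pure (a :: w)

theorem expectation_randomWord_cons (p : PMF α) (L : List (PMF α)) (f : List α → ℝ≥0∞) :
    expectation (randomWord (p :: L)) f =
      expectation p fun a => expectation (randomWord L) fun w => f (a :: w) := by
  simp only [randomWord, expectation_bind, expectation_pure]

theorem expectation_randomWord_append (L L' : List (PMF α)) (f : List α → ℝ≥0∞) :
    expectation (randomWord (L ++ L')) f =
      expectation (randomWord L) fun u => expectation (randomWord L') fun v => f (u ++ v) := by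
  induction L generalizing f with
  | nil => simp only [randomWord, List.nil_append, expectation_pure]
  | cons p L ih => simp only [List.cons_append, expectation_randomWord_cons, ih]

theorem expectation_randomWord_flatten (Ls : List (List (PMF α))) (f : List α → ℝ≥0∞) :
    expectation (randomWord Ls.flatten) f =
      expectation (randomWord (Ls.map randomWord)) fun ws => f ws.flatten := by
  induction Ls generalizing f with
  | nil => simp [randomWord, expectation_pure]
  | cons L Ls ih =>
    simp only [List.flatten_cons, List.map_cons, expectation_randomWord_append,
      expectation_randomWord_cons, ih]

theorem randomWord_apply_cons (p : PMF α) (L : List (PMF α)) (a : α) (w : List α) :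
    randomWord (p :: L) (a :: w) = p a * randomWord L w := by
  classical
  have hinner : ∀ a', ((randomWord L).bind fun w' => PMF.pure (a' :: w')) (a :: w) =
      if a' = a then randomWord L w else 0 := by
    intro a'
    rw [PMF.bind_apply, tsum_eq_single w fun w' hw => by simp [PMF.pure_apply, hw.symm]]
    simp [PMF.pure_apply, eq_comm]
  simp only [randomWord, PMF.bind_apply, hinner, mul_ite, mul_zero, tsum_ite_eq]

theorem length_eq_of_randomWord_ne_zero {L : List (PMF α)} {w : List α}
    (h : randomWord L w ≠ 0) : w.length = L.length := by
  induction L generalizing w with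
  | nil => simp_all [randomWord, PMF.pure_apply]
  | cons p L ih =>
    cases w with
    | nil => simp [randomWord, PMF.bind_apply, PMF.pure_apply] at h
    | cons a w =>
      rw [randomWord_apply_cons] at h
      rw [List.length_cons, List.length_cons, ih (right_ne_zero_of_mul h)]

theorem pow_length_le_randomWord {L : List (PMF α)} {w : List α} {δ : ℝ≥0∞}
    (hlen : w.length = L.length) (h : ∀ p ∈ L, ∀ a ∈ w, δ ≤ p a) :
    δ ^ L.length ≤ randomWord L w := by
  induction L generalizing w with
  | nil => simp_all [randomWord]
  | cons p L ih =>
    obtain ⟨a, w, rfl⟩ := List.exists_cons_of_length_eq_add_one hlen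
    simp only [List.forall_mem_cons, List.length_cons, add_left_inj] at h hlen
    rw [randomWord_apply_cons, List.length_cons, pow_succ']
    exact mul_le_mul' h.1.1 (ih hlen fun q hq => (h.2 q hq).2)

theorem randomWord_ofFn_apply {n : ℕ} (p : Fin n → PMF α) (x : Fin n → α) :
    randomWord (List.ofFn p) (List.ofFn x) = ∏ i, p i (x i) := by
  induction n with
  | zero => simp [randomWord]
  | succ n ih => simp only [List.ofFn_succ, randomWord_apply_cons, ih, Fin.prod_univ_succ]

theorem IsProbMeasure.exists_pmf {α : Type*} {ν : α → ℝ} (hν : IsProbMeasure ν) :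
    ∃ p : PMF α, ∀ a, (p a).toReal = ν a := by
  obtain ⟨hpos, hsum, hone⟩ := hν
  refine ⟨⟨fun a => ENNReal.ofReal (ν a), ?_⟩, fun a => ENNReal.toReal_ofReal (hpos a)⟩
  rw [ENNReal.summable.hasSum_iff, ← ENNReal.ofReal_tsum_of_nonneg hpos hsum, hone,
    ENNReal.ofReal_one]

theorem one_sub_le_tsum_toReal {α β : Type*} (p : PMF α) {e : β → α} (he : Function.Injective e)
    (hp : ∀ a, p a ≠ 0 → a ∈ Set.range e) {P : β → Prop} {S : Set α} (hP : ∀ x, e x ∉ S ↔ P x)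
    {η : ℝ} (hη : 0 ≤ η) (hS : expectation p (S.indicator 1) ≤ ENNReal.ofReal η) :
    1 - η ≤ ∑' x : {x // P x}, (p (e x)).toReal := by
  have hcompl : expectation p (Sᶜ.indicator 1) = ∑' x : {x // P x}, p (e x) := by
    have hinj : Function.Injective fun x : {x // P x} => e x := he.comp Subtype.val_injective
    rw [expectation, ← hinj.tsum_eq]
    · exact tsum_congr fun x => by simp [(hP x).2 x.2]
    · intro a ha
      obtain ⟨x, rfl⟩ := hp a (left_ne_zero_of_mul ha)
      exact ⟨⟨x, (hP x).1 (Set.mem_of_indicator_ne_zero (right_ne_zero_of_mul ha))⟩, rfl⟩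
  have hsplit : expectation p (S.indicator 1) + expectation p (Sᶜ.indicator 1) = 1 := by
    rw [← expectation_add, ← p.tsum_coe]
    exact tsum_congr fun a => by by_cases ha : a ∈ S <;> simp [ha]
  rw [hcompl] at hsplit
  have htop : ∑' x : {x // P x}, p (e x) ≠ ∞ :=
    ne_top_of_le_ne_top ENNReal.one_ne_top (hsplit ▸ le_add_self)
  rw [← ENNReal.tsum_toReal_eq fun x : {x // P x} => p.apply_ne_top (e x),
    ← ENNReal.ofReal_le_iff_le_toReal htop, ENNReal.ofReal_sub 1 hη, ENNReal.ofReal_one,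
    tsub_le_iff_left, ← hsplit]
  gcongr

end RandomWords

section Blocking

open scoped ENNReal

variable {β : Type*} {W : Finset β} {σ : ℝ≥0∞}

/-- Every letter of `l` lying in `W` is vetoed, by the part of `l` to its left or by the part to
its right; `B u` and `B' v` are the letters vetoed by a prefix `u` and by a suffix `v`. -/
def IsBlocked (W : Finset β) (B B' : List β → Set β) (l : List β) : Prop :=
  ∀ u w v, l = u ++ w :: v → w ∈ W → w ∈ B u ∨ w ∈ B' v

open Classical in
/-- The supermartingale factor of one letter `w` of law `p` against the veto set `b`. Its mean is
at most `1 - σ` when `b` contains at most one of the letters of `W`, while the product of two such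
factors is at least `1` as soon as one of the two sets vetoes `w`. -/
noncomputable def vetoWeight (W : Finset β) (σ : ℝ≥0∞) (p : PMF β) (b : Set β) (w : β) : ℝ≥0∞ :=
  if w ∈ W then if w ∈ b then (p w + 2 * σ) / p w else (p w - σ) / p w else 1

theorem one_le_add_div_mul_sub_div {x : ℝ≥0∞} (hx : x ≠ 0) (hx' : x ≠ ∞) (h : 2 * σ ≤ x) :
    1 ≤ (x + 2 * σ) / x * ((x - σ) / x) := by
  obtain ⟨r, rfl⟩ := exists_add_of_le h
  have hσ : σ ≠ ∞ := by rintro rfl; simp at hx'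
  have hsub : 2 * σ + r - σ = σ + r := by
    rw [two_mul, add_assoc, ENNReal.add_sub_cancel_left hσ]
  rw [hsub, ← ENNReal.mul_div_mul_comm (.inl hx) (.inl hx'), ENNReal.le_div_iff_mul_le
    (.inl (mul_ne_zero hx hx)) (.inl (ENNReal.mul_ne_top hx' hx')), one_mul]
  calc (2 * σ + r) * (2 * σ + r) ≤ (2 * σ + r) * (2 * σ + r) + σ * r := le_self_add
    _ = (2 * σ + r + 2 * σ) * (σ + r) := by ring

theorem one_le_vetoWeight_mul {p : PMF β} {b b' : Set β} {w : β} (hσ : σ ≠ 0)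
    (hp : w ∈ W → 2 * σ ≤ p w) (hveto : w ∈ W → w ∈ b ∨ w ∈ b') :
    1 ≤ vetoWeight W σ p b w * vetoWeight W σ p b' w := by
  by_cases hw : w ∈ W
  swap
  · simp [vetoWeight, hw]
  have hp0 : p w ≠ 0 := fun h => hσ (by simpa [h] using hp hw)
  have hmix := one_le_add_div_mul_sub_div hp0 (p.apply_ne_top w) (hp hw)
  have hone : 1 ≤ (p w + 2 * σ) / p w := by
    rw [ENNReal.le_div_iff_mul_le (.inl hp0) (.inl (p.apply_ne_top w)), one_mul]
    exact le_self_add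
  rcases hveto hw with hb | hb <;> by_cases hb' : w ∈ b <;> by_cases hb'' : w ∈ b' <;>
    simp_all [vetoWeight, mul_comm]

-- Under `p`, the at most one vetoed letter gains mass `2 * σ` and at least three lose `σ`.
theorem expectation_vetoWeight_le {p : PMF β} {b : Set β} (hσ : σ ≠ 0) (hW : 4 ≤ W.card)
    (hp : ∀ w ∈ W, 2 * σ ≤ p w) (hb : b.Subsingleton) :
    expectation p (vetoWeight W σ p b) ≤ 1 - σ := by
  classical
  have hσp : ∀ w ∈ W, σ ≤ p w := fun w hw =>
    (le_mul_of_one_le_left zero_le one_le_two).trans (hp w hw)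
  obtain ⟨w₀, hw₀⟩ : W.Nonempty := Finset.card_pos.1 (by omega)
  have hσtop : σ ≠ ∞ := ne_top_of_le_ne_top (p.apply_ne_top w₀) (hσp w₀ hw₀)
  have hpoint : ∀ w, p w * vetoWeight W σ p b w + (if w ∈ W then σ else 0) =
      p w + if w ∈ W.filter (· ∈ b) then 3 * σ else 0 := by
    intro w
    by_cases hw : w ∈ W
    swap
    · simp [vetoWeight, hw]
    have hp0 : p w ≠ 0 := fun h => hσ (by simpa [h] using hp w hw)
    by_cases hwb : w ∈ b <;>
      simp only [vetoWeight, hw, hwb, if_true, if_false, Finset.mem_filter, and_self, and_false,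
        ENNReal.mul_div_cancel hp0 (p.apply_ne_top w), add_zero]
    · ring
    · exact tsub_add_cancel_of_le (hσp w hw)
  have hsum : ∀ (S : Finset β) (c : ℝ≥0∞), ∑' w, (if w ∈ S then c else 0) = S.card * c := by
    intro S c
    rw [tsum_eq_sum (s := S) fun w hw => if_neg hw, Finset.sum_congr rfl fun w hw => if_pos hw,
      Finset.sum_const, nsmul_eq_mul]
  have htotal : expectation p (vetoWeight W σ p b) + W.card * σ =
      1 + (W.filter (· ∈ b)).card * (3 * σ) := by
    rw [← hsum, ← hsum, ← p.tsum_coe, expectation, ← ENNReal.tsum_add, ← ENNReal.tsum_add]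
    exact tsum_congr hpoint
  have hcard : (W.filter (· ∈ b)).card ≤ 1 := Finset.card_le_one.2 fun x hx y hy =>
    hb (Finset.mem_filter.1 hx).2 (Finset.mem_filter.1 hy).2
  have hle : expectation p (vetoWeight W σ p b) + σ + 3 * σ ≤ 1 + 3 * σ := by
    calc expectation p (vetoWeight W σ p b) + σ + 3 * σ
        = expectation p (vetoWeight W σ p b) + (4 : ℕ) * σ := by push_cast; ring
      _ ≤ expectation p (vetoWeight W σ p b) + W.card * σ := by gcongr
      _ ≤ 1 + (1 : ℕ) * (3 * σ) := by rw [htotal]; gcongr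
      _ = 1 + 3 * σ := by simp
  exact ENNReal.le_sub_of_add_le_right hσtop <|
    (ENNReal.add_le_add_iff_right (ENNReal.mul_ne_top (by simp) hσtop)).1 hle

/-- The product of the factors of the letters of a word against their prefixes. -/
noncomputable def prefixWeight (W : Finset β) (σ : ℝ≥0∞) :
    List (PMF β) → (List β → Set β) → List β → ℝ≥0∞
  | p :: L, B, w :: l =>
    vetoWeight W σ p (B []) w * prefixWeight W σ L (fun u => B (w :: u)) l
  | _, _, _ => 1

/-- The product of the factors of the letters of a word against their suffixes. -/
noncomputable def suffixWeight (W : Finset β) (σ : ℝ≥0∞) :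
    List (PMF β) → (List β → Set β) → List β → ℝ≥0∞
  | p :: L, B', w :: l => vetoWeight W σ p (B' l) w * suffixWeight W σ L B' l
  | _, _, _ => 1

theorem one_le_prefixWeight_mul_suffixWeight {L : List (PMF β)} {B B' : List β → Set β}
    {l : List β} (hσ : σ ≠ 0) (hL : ∀ p ∈ L, ∀ w ∈ W, 2 * σ ≤ p w) (hl : IsBlocked W B B' l) :
    1 ≤ prefixWeight W σ L B l * suffixWeight W σ L B' l := by
  induction L generalizing B l with
  | nil => simp [prefixWeight, suffixWeight]
  | cons p L ih =>
    cases l with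
    | nil => simp [prefixWeight, suffixWeight]
    | cons w l =>
      rw [List.forall_mem_cons] at hL
      have htail : IsBlocked W (fun u => B (w :: u)) B' l := fun u w' v hu =>
        hl (w :: u) w' v (by rw [hu, List.cons_append])
      rw [prefixWeight, suffixWeight, mul_mul_mul_comm]
      exact one_le_mul (one_le_vetoWeight_mul hσ (hL.1 w) (hl [] w l rfl)) (ih hL.2 htail)

theorem expectation_prefixWeight_le {L : List (PMF β)} {B : List β → Set β} (hσ : σ ≠ 0)
    (hW : 4 ≤ W.card) (hL : ∀ p ∈ L, ∀ w ∈ W, 2 * σ ≤ p w) (hB : ∀ u, (B u).Subsingleton) :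
    expectation (randomWord L) (prefixWeight W σ L B) ≤ (1 - σ) ^ L.length := by
  induction L generalizing B with
  | nil => simp [randomWord, expectation_pure, prefixWeight]
  | cons p L ih =>
    rw [List.forall_mem_cons] at hL
    simp only [expectation_randomWord_cons, prefixWeight, expectation_const_mul]
    calc expectation p (fun w => vetoWeight W σ p (B []) w *
          expectation (randomWord L) (prefixWeight W σ L fun u => B (w :: u)))
        ≤ expectation p (fun w => vetoWeight W σ p (B []) w * (1 - σ) ^ L.length) :=
          expectation_mono fun w _ => mul_le_mul_right (ih hL.2 fun u => hB (w :: u)) _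
      _ ≤ (1 - σ) * (1 - σ) ^ L.length := by
          rw [expectation_mul_const]
          exact mul_le_mul_left (expectation_vetoWeight_le hσ hW hL.1 (hB [])) _
      _ = (1 - σ) ^ (L.length + 1) := (pow_succ' _ _).symm

theorem expectation_suffixWeight_le {L : List (PMF β)} {B' : List β → Set β} (hσ : σ ≠ 0)
    (hW : 4 ≤ W.card) (hL : ∀ p ∈ L, ∀ w ∈ W, 2 * σ ≤ p w) (hB' : ∀ v, (B' v).Subsingleton) :
    expectation (randomWord L) (suffixWeight W σ L B') ≤ (1 - σ) ^ L.length := by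
  induction L with
  | nil => simp [randomWord, expectation_pure, suffixWeight]
  | cons p L ih =>
    rw [List.forall_mem_cons] at hL
    rw [expectation_randomWord_cons, expectation_comm]
    simp only [suffixWeight, expectation_mul_const]
    calc expectation (randomWord L) (fun l => expectation p (vetoWeight W σ p (B' l)) *
          suffixWeight W σ L B' l)
        ≤ expectation (randomWord L) (fun l => (1 - σ) * suffixWeight W σ L B' l) :=
          expectation_mono fun l _ =>
            mul_le_mul_left (expectation_vetoWeight_le hσ hW hL.1 (hB' l)) _
      _ ≤ (1 - σ) * (1 - σ) ^ L.length := by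
          rw [expectation_const_mul]
          exact mul_le_mul_right (ih hL.2) _
      _ = (1 - σ) ^ (L.length + 1) := (pow_succ' _ _).symm

theorem expectation_isBlocked_le {L : List (PMF β)} {B B' : List β → Set β} (hσ : σ ≠ 0)
    (hW : 4 ≤ W.card) (hL : ∀ p ∈ L, ∀ w ∈ W, 2 * σ ≤ p w) (hB : ∀ u, (B u).Subsingleton)
    (hB' : ∀ v, (B' v).Subsingleton) :
    expectation (randomWord L) (Set.indicator {l | IsBlocked W B B' l} 1) ≤
      2 * (1 - σ) ^ L.length := by
  have hle : ∀ l, Set.indicator {l | IsBlocked W B B' l} 1 l ≤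
      prefixWeight W σ L B l + suffixWeight W σ L B' l := by
    refine Set.indicator_le fun l hl => ?_
    have hmul := one_le_prefixWeight_mul_suffixWeight hσ hL hl
    by_contra! hlt
    have h₁ : prefixWeight W σ L B l < 1 := le_self_add.trans_lt hlt
    have h₂ : suffixWeight W σ L B' l < 1 := le_add_self.trans_lt hlt
    exact hmul.not_gt (mul_lt_one_of_lt_of_le h₁ h₂.le)
  refine (expectation_mono fun l _ => hle l).trans ?_
  rw [expectation_add, two_mul]
  exact add_le_add (expectation_prefixWeight_le hσ hW hL hB)
    (expectation_suffixWeight_le hσ hW hL hB')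

end Blocking

section Decomposition

variable {α : Type*}

theorem exists_flatten_append_eq {N M : ℕ} {L : List α} (h : M * N ≤ L.length) :
    ∃ (Ls : List (List α)) (R : List α), Ls.flatten ++ R = L ∧ Ls.length = M ∧
      ∀ l ∈ Ls, l.length = N := by
  induction M generalizing L with
  | zero => exact ⟨[], L, by simp⟩
  | succ M ih =>
    rw [add_mul, one_mul] at h
    obtain ⟨Ls, R, hL, hlen, hN⟩ := ih (L := L.drop N) (by rw [List.length_drop]; omega)
    refine ⟨L.take N :: Ls, R, ?_, by simp [hlen], List.forall_mem_cons.2 ⟨?_, hN⟩⟩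
    · rw [List.flatten_cons, List.append_assoc, hL, List.take_append_drop]
    · rw [List.length_take]; omega

-- The middle index `j` splits the free indices into two runs; take the longer one.
theorem exists_free_blocks {k j N : ℕ} (hk : 2 < k) (hj : 1 < j) (hjk : j < k) (hN : 0 < N)
    {P : α → Prop} {x : Fin k → α}
    (hP : ∀ i : Fin k, 2 ≤ (i : ℕ) + 1 → (i : ℕ) + 1 ≤ k - 1 → (i : ℕ) + 1 ≠ j → P (x i)) :
    ∃ (L₁ L₂ : List α) (Ls : List (List α)), L₁ ++ Ls.flatten ++ L₂ = List.ofFn x ∧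
      L₁ ≠ [] ∧ L₂ ≠ [] ∧ (∀ L ∈ Ls, L.length = N) ∧ (∀ L ∈ Ls, ∀ a ∈ L, P a) ∧
      k ≤ 5 * (N * (Ls.length + 1)) := by
  obtain ⟨r, n, hr, hrn, hfree, hn⟩ : ∃ r n : ℕ, 1 ≤ r ∧ r + n < k ∧
      (∀ i, r ≤ i → i < r + n → i + 1 ≠ j) ∧ k ≤ 2 * n + 3 := by
    by_cases h : k - 3 ≤ 2 * (j - 2)
    · exact ⟨1, j - 2, by omega, by omega, by omega, by omega⟩
    · exact ⟨j, k - 1 - j, by omega, by omega, by omega, by omega⟩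
  set L := List.ofFn x
  have hlen : L.length = k := List.length_ofFn
  obtain ⟨Ls, R, hLs, hcard, hlenN⟩ := exists_flatten_append_eq (N := N) (M := n / N)
    (L := (L.drop r).take n) (by
      rw [List.length_take, List.length_drop, hlen, min_eq_left (by omega)]
      exact Nat.div_mul_le_self n N)
  refine ⟨L.take r, R ++ (L.drop r).drop n, Ls, ?_, ?_, ?_, hlenN, fun l hl a ha => ?_, ?_⟩
  · rw [List.append_assoc, ← List.append_assoc _ R, hLs, List.take_append_drop,
      List.take_append_drop]
  · exact List.ne_nil_of_length_pos (by rw [List.length_take]; omega)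
  · exact List.ne_nil_of_length_pos (by simp only [List.length_append, List.length_drop]; omega)
  · have ha' : a ∈ (L.drop r).take n :=
      hLs ▸ List.mem_append_left R (List.mem_flatten_of_mem hl ha)
    obtain ⟨i, hi, rfl⟩ := List.mem_take_iff_getElem.1 ha'
    simp only [List.length_drop, hlen] at hi
    have hik : r + i < k := by omega
    rw [List.getElem_drop, List.getElem_ofFn]
    exact hP ⟨r + i, hik⟩ (by simp; omega) (by simp; omega) (hfree _ (by simp) (by simp; omega))
  · have hdiv : n < N * (Ls.length + 1) := hcard ▸ Nat.lt_mul_div_succ n hN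
    have hpos : 1 ≤ N * (Ls.length + 1) := by omega
    omega

end Decomposition

section Thresholds

open scoped ENNReal

theorem exists_two_mul_one_sub_pow_le {σ : ℝ≥0∞} (hσ : σ ≠ 0) (hσ' : σ ≠ ∞) (N : ℕ) :
    ∃ K₀ > 0, ∀ K ≥ K₀, ∀ k M : ℕ, k ≤ 5 * (N * (M + 1)) →
      2 * (1 - σ) ^ M ≤ ENNReal.ofReal (K * Real.exp (-(k : ℝ) / K)) := by
  set β := σ.toReal
  have hβ : 0 < β := ENNReal.toReal_pos hσ hσ'
  refine ⟨max (2 * Real.exp β) (5 * N / β), by positivity, fun K hK k M hk => ?_⟩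
  obtain ⟨hKexp, hKN⟩ := max_le_iff.1 hK
  have hKpos : 0 < K := by linarith [Real.exp_pos β]
  have hexponent : (k : ℝ) / K ≤ β * (M + 1) := by
    rw [div_le_iff₀ hβ] at hKN
    rw [div_le_iff₀ hKpos]
    calc (k : ℝ) ≤ 5 * (N * (M + 1)) := mod_cast hk
      _ = 5 * N * (M + 1) := by ring
      _ ≤ K * β * (M + 1) := by gcongr
      _ = β * (M + 1) * K := by ring
  have hbase : 1 - σ ≤ ENNReal.ofReal (Real.exp (-β)) := by
    rw [← ENNReal.ofReal_toReal hσ', ← ENNReal.ofReal_one,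
      ← ENNReal.ofReal_sub 1 ENNReal.toReal_nonneg]
    exact ENNReal.ofReal_le_ofReal (Real.one_sub_le_exp_neg β)
  calc 2 * (1 - σ) ^ M ≤ 2 * ENNReal.ofReal (Real.exp (-β)) ^ M := by gcongr
    _ = ENNReal.ofReal (2 * Real.exp (-β) ^ M) := by
        rw [ENNReal.ofReal_mul zero_le_two, ENNReal.ofReal_pow (Real.exp_pos _).le,
          ENNReal.ofReal_ofNat]
    _ = ENNReal.ofReal (2 * Real.exp β * Real.exp (-(β * (M + 1)))) := by
        rw [← Real.exp_nat_mul, mul_assoc, ← Real.exp_add]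
        ring_nf
    _ ≤ ENNReal.ofReal (K * Real.exp (-(k : ℝ) / K)) := by
        rw [neg_div]
        gcongr

theorem abs_sub_lt_of_tsum_abs_sub_lt {α : Type*} {μ ν : α → ℝ} {ε : ℝ} (hμ : Summable μ)
    (hν : Summable ν) (h : ∑' a, |ν a - μ a| < ε) (a : α) : |ν a - μ a| < ε :=
  ((hν.sub hμ).abs.le_tsum a fun _ _ => abs_nonneg _).trans_lt h

theorem exists_forall_mem_le_of_pos {α ι : Type*} [Finite ι] (w : ι → List α) {μ : α → ℝ}
    (hμ : ∀ t, ∀ a ∈ w t, 0 < μ a) : ∃ d > 0, ∀ t, ∀ a ∈ w t, d ≤ μ a := by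
  have hev : ∀ᶠ d in 𝓝[>] (0 : ℝ), ∀ t, ∀ a ∈ w t, d ≤ μ a := eventually_all.2 fun t =>
    (w t).finite_toSet.eventually_all.2 fun a ha =>
      eventually_nhdsWithin_of_eventually_nhds (eventually_le_nhds (hμ t a ha))
  obtain ⟨d, hd, hpos⟩ := (hev.and self_mem_nhdsWithin).exists
  exact ⟨d, hpos, hd⟩

end Thresholds

section RandomWalk

open scoped ENNReal

variable {G X : Type*} [Group G] [MetricSpace X] [MulAction G X] {o : X} {K : ℝ}

theorem exists_randomWord_eq_tupleWeight {k j : ℕ} (a b c : G) {ν : ℕ → G → ℝ}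
    (hν : ∀ i, 2 ≤ i → i ≤ k - 1 → i ≠ j → IsProbMeasure (ν i)) :
    ∃ p : Fin k → PMF G,
      (∀ i : Fin k, 2 ≤ (i : ℕ) + 1 → (i : ℕ) + 1 ≤ k - 1 → (i : ℕ) + 1 ≠ j →
        ∀ g, (p i g).toReal = ν (i + 1) g) ∧
      ∀ x, tupleWeight k j a b c ν x = (randomWord (List.ofFn p) (List.ofFn x)).toReal := by
  classical
  have hpure : ∀ a : G, ∃ p : PMF G, ∀ g, (p g).toReal = if g = a then 1 else 0 := fun a =>
    ⟨PMF.pure a, fun g => by rw [PMF.pure_apply]; split_ifs <;> simp⟩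
  have hlaw : ∀ i : Fin k, ∃ p : PMF G, ∀ g, (p g).toReal =
      if (i : ℕ) + 1 = 1 then (if g = a then (1 : ℝ) else 0)
      else if (i : ℕ) + 1 = j then (if g = b then (1 : ℝ) else 0)
      else if (i : ℕ) + 1 = k then (if g = c then (1 : ℝ) else 0)
      else ν ((i : ℕ) + 1) g := by
    intro i
    split_ifs
    exacts [hpure a, hpure b, hpure c, (hν _ (by omega) (by omega) ‹_›).exists_pmf]
  choose p hp using hlaw
  refine ⟨p, fun i h₁ hk hj g => ?_, fun x => ?_⟩
  · rw [hp, if_neg (by omega), if_neg hj, if_neg (by omega)]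
  · rw [randomWord_ofFn_apply, ENNReal.toReal_prod, tupleWeight]
    exact Finset.prod_congr rfl fun i _ => by rw [hp]

theorem closeEvent_get_ofFn {k : ℕ} {x : Fin k → G} :
    CloseEvent o K (List.ofFn x).get ↔ CloseEvent o K x := by
  simp only [CloseEvent, List.ofFn_get]
  rw [List.length_ofFn]

variable {ι : Type*} {w : ι → List G} {b b' : X → Set ι}

theorem IsSchottky.isBlocked [IsIsometricSMul G X]
    (hs : IsSchottky o K (fun t => (w t).prod) b b') (hw : ∀ t, w t ≠ [])
    {W : Finset (List G)} (hW : (W : Set (List G)) ⊆ Set.range w) {u v : List G} (hu : u ≠ [])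
    (hv : v ≠ []) {l : List (List G)} (hl : ¬CloseEvent o K (u ++ l.flatten ++ v).get) :
    IsBlocked W (fun p => w '' b ((u ++ p.flatten).prod⁻¹ • o))
      (fun q => w '' b' ((q.flatten ++ v).prod • o)) l := by
  rintro p _ q rfl hmem
  obtain ⟨t, rfl⟩ := hW hmem
  by_contra! hveto
  obtain ⟨hb, hb'⟩ := hveto
  refine hl ?_
  have hsplit : u ++ (p ++ w t :: q).flatten ++ v =
      u ++ p.flatten ++ w t ++ (q.flatten ++ v) := by simp
  rw [hsplit]
  refine hs.closeEvent (t := t) rfl ?_ (by simp [hv])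
    (fun h => hb (Set.mem_image_of_mem w h)) fun h => hb' (Set.mem_image_of_mem w h)
  have hu' := List.length_pos_of_ne_nil hu
  have hw' := List.length_pos_of_ne_nil (hw t)
  simp only [List.length_append]
  omega

theorem IsSchottky.expectation_not_closeEvent_le [IsIsometricSMul G X] [Fintype ι]
    (hs : IsSchottky o K (fun t => (w t).prod) b b') (hι : 4 ≤ Fintype.card ι) {N : ℕ}
    (hN : 0 < N) (hw : ∀ t, (w t).length = N) {δ : ℝ≥0∞} (hδ : δ ≠ 0)
    {L₁ L₂ : List (PMF G)} {Ls : List (List (PMF G))} (h₁ : L₁ ≠ []) (h₂ : L₂ ≠ [])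
    (hlen : ∀ L ∈ Ls, L.length = N) (hLs : ∀ L ∈ Ls, ∀ p ∈ L, ∀ t, ∀ a ∈ w t, δ ≤ p a) :
    expectation (randomWord (L₁ ++ Ls.flatten ++ L₂))
        (Set.indicator {l | ¬CloseEvent o K l.get} 1) ≤
      2 * (1 - δ ^ N / 2) ^ Ls.length := by
  let e : ι ↪ List G := ⟨w, fun s t h => hs.injective (congrArg List.prod h)⟩
  have hmass : ∀ p ∈ Ls.map randomWord, ∀ l ∈ Finset.univ.map e, 2 * (δ ^ N / 2) ≤ p l := by
    simp only [List.forall_mem_map, Finset.mem_map, Finset.mem_univ, true_and,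
      forall_exists_index, forall_apply_eq_imp_iff]
    intro L hL t
    rw [ENNReal.mul_div_cancel two_ne_zero (by simp), ← hlen L hL]
    exact pow_length_le_randomWord ((hw t).trans (hlen L hL).symm) fun p hp => hLs L hL p hp t
  have hne : ∀ {L : List (PMF G)} {u : List G}, L ≠ [] → randomWord L u ≠ 0 → u ≠ [] :=
    fun hL hu => by rwa [← List.length_pos_iff, length_eq_of_randomWord_ne_zero hu,
      List.length_pos_iff]
  rw [List.append_assoc, expectation_randomWord_append]
  refine expectation_le_of_forall_le fun u hu => ?_
  rw [expectation_randomWord_append, expectation_comm]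
  refine expectation_le_of_forall_le fun v hv => ?_
  have hblocked : ∀ l : List (List G), ¬CloseEvent o K (u ++ (l.flatten ++ v)).get →
      IsBlocked (Finset.univ.map e) (fun p => w '' b ((u ++ p.flatten).prod⁻¹ • o))
        (fun q => w '' b' ((q.flatten ++ v).prod • o)) l := fun l hl =>
    hs.isBlocked (fun t => List.length_pos_iff.1 (hw t ▸ hN))
      (by rw [Finset.coe_map]; exact Set.image_subset_range w _) (hne h₁ hu) (hne h₂ hv)
      (by rwa [List.append_assoc])
  rw [expectation_randomWord_flatten, ← List.length_map (as := Ls) randomWord]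
  refine (expectation_mono fun l _ => ?_).trans <| expectation_isBlocked_le
    (ENNReal.div_ne_zero.2 ⟨pow_ne_zero N hδ, by simp⟩) (by simpa) hmass
    (fun p => (hs.subsingleton_left ((u ++ p.flatten).prod⁻¹ • o)).image w)
    fun q => (hs.subsingleton_right ((q.flatten ++ v).prod • o)).image w
  refine Set.indicator_apply_le' (fun hl => ?_) fun _ => zero_le
  rw [Set.indicator_of_mem, Pi.one_apply, Pi.one_apply]
  exact hblocked l hl

theorem IsSchottky.exists_one_sub_le_tsum_tupleWeight [IsIsometricSMul G X] [Fintype ι]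
    (hs : IsSchottky o K (fun t => (w t).prod) b b') (hι : 4 ≤ Fintype.card ι) {N : ℕ}
    (hN : 0 < N) (hw : ∀ t, (w t).length = N) {d : ℝ} (hd : 0 < d) :
    ∃ K₁ > 0, ∀ K', K ≤ K' → K₁ ≤ K' → ∀ k j : ℕ, 2 < k → 1 < j → j < k → ∀ (a₁ a₂ a₃ : G)
      (ν : ℕ → G → ℝ), (∀ i, 2 ≤ i → i ≤ k - 1 → i ≠ j → IsProbMeasure (ν i)) →
      (∀ i, 2 ≤ i → i ≤ k - 1 → i ≠ j → ∀ t, ∀ g ∈ w t, d ≤ ν i g) →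
      1 - K' * Real.exp (-(k : ℝ) / K') ≤
        ∑' x : {x : Fin k → G // CloseEvent o K' x}, tupleWeight k j a₁ a₂ a₃ ν x.1 := by
  set δ := ENNReal.ofReal d
  have hδ : δ ≠ 0 := by simpa [δ] using hd
  obtain ⟨K₁, hK₁, hdecay⟩ := exists_two_mul_one_sub_pow_le (σ := δ ^ N / 2)
    (by simp [hδ]) (by finiteness) N
  refine ⟨K₁, hK₁, fun K' hK hK' k j hk hj hjk a₁ a₂ a₃ ν hν hd => ?_⟩
  have hpos : 0 < K' := hK₁.trans_le hK'
  obtain ⟨p, hfree, hp⟩ := exists_randomWord_eq_tupleWeight a₁ a₂ a₃ hν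
  obtain ⟨L₁, L₂, Ls, hL, h₁, h₂, hlen, hmass, hcard⟩ := exists_free_blocks hk hj hjk hN (x := p)
    (P := fun q => ∀ t, ∀ g ∈ w t, δ ≤ q g) fun i hi hik hij t g hg => by
      rw [ENNReal.ofReal_le_iff_le_toReal (PMF.apply_ne_top _ _), hfree i hi hik hij]
      exact hd _ hi hik hij t g hg
  simp only [hp]
  refine one_sub_le_tsum_toReal _ List.ofFn_injective (fun l hl => ?_)
    (S := {l | ¬CloseEvent o K' l.get}) (fun x => ?_) (by positivity) ?_
  · have hlk : l.length = k := by rw [length_eq_of_randomWord_ne_zero hl, List.length_ofFn]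
    subst hlk
    exact ⟨l.get, List.ofFn_get l⟩
  · simp [closeEvent_get_ofFn]
  · rw [← hL]
    exact ((hs.mono hK).expectation_not_closeEvent_le hι hN hw hδ h₁ h₂ hlen hmass).trans
      (hdecay K' hK' k _ hcard)

end RandomWalk

theorem conditioned_dist_estimate_general {G X : Type*} [Group G] [MetricSpace X] [MulAction G X]
    (o : X) (hgeo : IsGeodesicSpace X) (hiso : ∀ g : G, Isometry fun x : X => g • x)
    (μ : G → ℝ) (hμ : IsProbMeasure μ) (hne : NonElementary o μ) :
    ∃ K : ℝ, 0 < K ∧ ∃ ε : ℝ, 0 < ε ∧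
      ∀ k : ℕ, 2 < k → ∀ j : ℕ, 1 < j → j < k → ∀ a b c : G,
        ∀ ν : ℕ → G → ℝ,
          (∀ i : ℕ, 2 ≤ i → i ≤ k - 1 → i ≠ j →
            IsProbMeasure (ν i) ∧ (∑' g : G, |ν i g - μ g|) < ε) →
          1 - K * Real.exp (-(k : ℝ) / K) ≤
            ∑' x : {x : Fin k → G // CloseEvent o K x}, tupleWeight k j a b c ν x.1 := by
  have : IsIsometricSMul G X := ⟨hiso⟩
  obtain ⟨K₀, N, w, b₀, b₁, hN, hw, hwμ, hs⟩ := hne.exists_isSchottky hgeo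
  obtain ⟨d, hd, hdμ⟩ := exists_forall_mem_le_of_pos w hwμ
  obtain ⟨K₁, hK₁, hest⟩ :=
    hs.exists_one_sub_le_tsum_tupleWeight (Fintype.card_fin 4).ge hN hw (half_pos hd)
  refine ⟨max K₀ K₁, lt_max_of_lt_right hK₁, d / 2, half_pos hd,
    fun k hk j hj hjk a b c ν hν => ?_⟩
  refine hest _ (le_max_left _ _) (le_max_right _ _) k j hk hj hjk a b c ν
    (fun i h₁ hik hij => (hν i h₁ hik hij).1) fun i h₁ hik hij t g hg => ?_
  obtain ⟨hνi, hνμ⟩ := hν i h₁ hik hij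
  have habs := abs_sub_lt_of_tsum_abs_sub_lt hμ.2.1 hνi.2.1 hνμ g
  linarith [hdμ t g hg, (abs_lt.1 habs).1]

/-- Lemma 3.1 (conditioned closeness to the geodesic): with probability
`≥ 1 − K e^{−k/K}` some intermediate point of the random path is `K`-close to
every geodesic from `o` to the endpoint. -/
theorem conditioned_dist_estimate
    {G X : Type*} [Group G] [Countable G] [MetricSpace X] [MulAction G X]
    (o : X) (hgeo : IsGeodesicSpace X)
    (hiso : ∀ g : G, Isometry fun x : X => g • x)
    (hind : HasIndepContracting G o)
    (μ : G → ℝ) (hμ : IsProbMeasure μ) (hne : NonElementary o μ) :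
    ∃ K : ℝ, 0 < K ∧ ∃ ε : ℝ, 0 < ε ∧
      ∀ k : ℕ, 2 < k → ∀ j : ℕ, 1 < j → j < k → ∀ a b c : G,
        ∀ ν : ℕ → G → ℝ,
          (∀ i : ℕ, 2 ≤ i → i ≤ k - 1 → i ≠ j →
            IsProbMeasure (ν i) ∧ (∑' g : G, |ν i g - μ g|) < ε) →
          1 - K * Real.exp (-(k : ℝ) / K) ≤
            ∑' x : {x : Fin k → G // CloseEvent o K x}, tupleWeight k j a b c ν x.1 := by
  exact conditioned_dist_estimate_general o hgeo hiso μ hμ hne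
end

section
/- Let X be a geodesic metric space with basepoint o, let G be a countable group acting on X by isometries containing two independent contracting isometries, and let μ be a non-elementary probability measure on G with L(μ) < ∞. Then there exist K₁ > 0 and ε > 0 such that for all integers n, m ≥ 0, every g ∈ G, and every family of probability measures ν₁,…,ν_n, ν_{−1},…,ν_{−m} on G with ‖ν_i − μ‖_{0,1} < ε for each i, the expectation of the defect R_{n,m}((g_i)) is at most K₁, where g₀ = g is fixed and the g_i (1 ≤ i ≤ n and −m ≤ i ≤ −1) are independent random elements of G with law ν_i. -/
open Filter Topology Pointwise

/-- First moment `L(μ) = ∑_g μ(g) d(o, g o)`. -/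
noncomputable def firstMoment {G X : Type*} [Group G] [MetricSpace X] [MulAction G X]
    (o : X) (μ : G → ℝ) : ℝ :=
  ∑' g : G, μ g * dist o (g • o)

/-- `μ` has finite first moment. -/
def HasFiniteFirstMoment {G X : Type*} [Group G] [MetricSpace X] [MulAction G X]
    (o : X) (μ : G → ℝ) : Prop :=
  Summable fun g : G => μ g * dist o (g • o)

/-- The escape rate `l(μ) = lim_n L(μ^{*n})/n`; by subadditivity of `n ↦ L(μ^{*n})`
(Fekete), the limit equals the infimum. -/
noncomputable def escapeRate {G X : Type*} [Group G] [MetricSpace X] [MulAction G X]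
    (o : X) (μ : G → ℝ) : ℝ :=
  ⨅ n : ℕ, firstMoment o (convPow μ (n + 1)) / (n + 1 : ℝ)

/-- The norm `‖η‖₀ + ‖η‖₁ = ∑_g (1 + d(o, g o))|η(g)|`, valued in `ℝ≥0∞` so that
finiteness is recorded. -/
noncomputable def enorm01 {G X : Type*} [Group G] [MetricSpace X] [MulAction G X]
    (o : X) (η : G → ℝ) : ENNReal :=
  ∑' g : G, ENNReal.ofReal ((1 + dist o (g • o)) * |η g|)

/-- The defect `d(o,a·o) + d(o,b·o) + d(o,c·o) − d(o,(abc)·o)`. -/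
noncomputable def defect {G X : Type*} [Group G] [MetricSpace X] [MulAction G X]
    (o : X) (a b c : G) : ℝ :=
  dist o (a • o) + dist o (b • o) + dist o (c • o) - dist o ((a * b * c) • o)

/-- Product `g_{-m} ⋯ g_{-1}` where `y j = g_{-(j+1)}`. -/
def negProd {G : Type*} [Group G] {m : ℕ} (y : Fin m → G) : G :=
  (List.ofFn y).reverse.prod

/-- Product `g_1 ⋯ g_n` where `z i = g_{i+1}`. -/
def posProd {G : Type*} [Group G] {n : ℕ} (z : Fin n → G) : G :=
  (List.ofFn z).prod

/-- Expected defect `E[R_{n,m}]` where `g₀ = g` is fixed and `g_i` has law `ν i`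
for `i = 1,…,n` and `i = −1,…,−m`. -/
noncomputable def defectExpFam {G X : Type*} [Group G] [MetricSpace X] [MulAction G X]
    (o : X) (ν : ℤ → G → ℝ) (m n : ℕ) (g : G) : ℝ :=
  ∑' p : (Fin m → G) × (Fin n → G),
    (∏ j : Fin m, ν (-(((j : ℕ) : ℤ) + 1)) (p.1 j)) *
      (∏ i : Fin n, ν (((i : ℕ) : ℤ) + 1) (p.2 i)) *
      defect o (negProd p.1) g (posProd p.2)

/-!
With `a`, `c` the random products before and after `g`, the defect is twice the sum of the Gromov
products at `o` of `g • o`, `a⁻¹ • o` and of `(a * g)⁻¹ • o`, `c • o`. As `a` and `c` are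
independent, it suffices to bound the expected Gromov product at `o` of a fixed point `x` and the
endpoint of a random path, uniformly in `x` and in the length of the path; for `a⁻¹` this is applied
to the inverted steps.

Two independent contracting isometries provide four words `s i` of equal length `N` such that for
all `x` and `y` the Gromov product of `x` and `s i • y` is at most `C` unless `i` is a bad index
`α x` of `x` or a bad index `β y` of `y`. Cut the path into blocks of length `N`: each block equals
each `s i` with probability bounded below, and the first good block bounds the Gromov product by `C`
plus the length of the path before it. The difficulty is that whether a block is good depends on
both the earlier and the later blocks. So give each block a weight that is doubled at the index
`α x` and halved at the other indices, depending only on the past, and a similar one for `β y`,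
depending only on the future. At a bad block their product is at least `1`, so as long as all blocks
are bad one of the two accumulated weights is at least `1`; but either one has exponentially
decaying expectation.
-/

open scoped ENNReal

section Geometry

variable {X : Type*} [MetricSpace X]

/-- The Gromov product `(x | y)_o`: the length for which geodesics from `o` to `x` and to `y`
fellow-travel in a tree. -/
noncomputable def gromovProduct (o x y : X) : ℝ :=
  (dist o x + dist o y - dist x y) / 2

lemma gromovProduct_nonneg (o x y : X) : 0 ≤ gromovProduct o x y := by
  unfold gromovProduct
  linarith [dist_triangle_left x y o]

lemma gromovProduct_le_add_dist_base (o p x y : X) :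
    gromovProduct o x y ≤ gromovProduct p x y + dist o p := by
  unfold gromovProduct
  linarith [dist_triangle o p x, dist_triangle o p y]

lemma gromovProduct_le_add_dist_right (o x y z : X) :
    gromovProduct o x z ≤ gromovProduct o x y + dist y z := by
  unfold gromovProduct
  linarith [dist_triangle o y z, dist_triangle_right x y z]

lemma gromovProduct_smul {G : Type*} [SMul G X] [IsIsometricSMul G X] (g : G) (o x y : X) :
    gromovProduct (g • o) (g • x) (g • y) = gromovProduct o x y := by
  simp only [gromovProduct, dist_smul]

lemma gromovProduct_smul_right_le {G : Type*} [Group G] [MulAction G X] [IsIsometricSMul G X]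
    (o x y : X) (g : G) :
    gromovProduct o x (g • y) ≤ dist o (g • o) + gromovProduct o (g⁻¹ • x) y := by
  have := gromovProduct_le_add_dist_base o (g • o) x (g • y)
  rw [← gromovProduct_smul g o (g⁻¹ • x) y, smul_inv_smul]
  linarith

lemma IsGeodesicSegment.restrict_s5 {f : ℝ → X} {x z : X} (hf : IsGeodesicSegment f x z) {u : ℝ}
    (hu : u ∈ Set.Icc 0 (dist x z)) : IsGeodesicSegment f x (f u) ∧ dist x (f u) = u := by
  have hdist : dist x (f u) = u := by
    rw [← hf.1, hf.2.2 0 ⟨le_rfl, dist_nonneg⟩ u hu, zero_sub, abs_neg, abs_of_nonneg hu.1]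
  refine ⟨⟨hf.1, by rw [hdist], fun s hs t ht ↦ ?_⟩, hdist⟩
  rw [hdist] at hs ht
  exact hf.2.2 s ⟨hs.1, hs.2.trans hu.2⟩ t ⟨ht.1, ht.2.trans hu.2⟩

lemma IsGeodesicSegment.gromovProduct_le_dist {f : ℝ → X} {x z : X}
    (hf : IsGeodesicSegment f x z) (p : X) {u : ℝ} (hu : u ∈ Set.Icc 0 (dist x z)) :
    gromovProduct p x z ≤ dist (f u) p := by
  have hleft : dist x (f u) = u := (hf.restrict_s5 hu).2
  have hright : dist (f u) z = dist x z - u := by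
    rw [← hf.2.1, hf.2.2 u hu _ ⟨dist_nonneg, le_rfl⟩, hf.2.1, abs_sub_comm,
      abs_of_nonneg (sub_nonneg.2 hu.2)]
  unfold gromovProduct
  linarith [dist_triangle_left p x (f u), dist_triangle_left p z (f u),
    dist_comm x (f u), dist_comm p x, dist_triangle p (f u) x, dist_triangle p (f u) z,
    dist_comm p (f u)]

lemma mem_projSetOf {A B : Set X} {a : X} : a ∈ projSetOf A B ↔ ∃ x ∈ B, a ∈ projSet A x := by
  simp only [projSetOf, Set.mem_iUnion, exists_prop]

lemma dist_le_of_mem_projSet {A : Set X} {x p a : X} (hp : p ∈ projSet A x) (ha : a ∈ A) :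
    dist x p ≤ dist x a :=
  hp.2.trans_le (Metric.infDist_le_dist_of_mem ha)

lemma mem_projSet_of_forall_dist_le {A : Set X} {x p : X} (hp : p ∈ A)
    (h : ∀ a ∈ A, dist x p ≤ dist x a) : p ∈ projSet A x :=
  ⟨hp, ((Metric.le_infDist ⟨p, hp⟩).2 h).antisymm (Metric.infDist_le_dist_of_mem hp)⟩

namespace IsQuasigeodesicZ

variable {K : ℝ} {γ : ℤ → X}

lemma tendsto_dist (hK : 0 < K) (hγ : IsQuasigeodesicZ K γ) (x : X) :
    Tendsto (fun i ↦ dist x (γ i)) cofinite atTop := by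
  have habs : Tendsto (fun i : ℤ ↦ |(i : ℝ)|) cofinite atTop :=
    tendsto_norm_cocompact_atTop.comp Int.tendsto_coe_cofinite
  refine tendsto_atTop_mono (fun i ↦ ?_)
    (tendsto_atTop_add_const_right _ (-K - dist x (γ 0)) (habs.atTop_div_const hK))
  have := (hγ i 0).1
  simp only [Int.cast_zero, sub_zero] at this
  linarith [dist_triangle_left (γ i) (γ 0) x]

lemma projSet_nonempty (hK : 0 < K) (hγ : IsQuasigeodesicZ K γ) (x : X) :
    (projSet (Set.range γ) x).Nonempty := by
  obtain ⟨i, hi⟩ := (hγ.tendsto_dist hK x).exists_forall_le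
  exact ⟨γ i, mem_projSet_of_forall_dist_le ⟨i, rfl⟩ (Set.forall_mem_range.2 hi)⟩

lemma exists_forall_lt_dist (hK : 0 < K) (hγ : IsQuasigeodesicZ K γ) (x : X) (B : ℝ) :
    ∃ R : ℕ, ∀ i : ℤ, R < i.natAbs → B < dist x (γ i) := by
  have hfin : {i | ¬ B < dist x (γ i)}.Finite :=
    eventually_cofinite.1 ((hγ.tendsto_dist hK x).eventually_gt_atTop B)
  obtain ⟨R, hR⟩ := (hfin.image Int.natAbs).bddAbove
  refine ⟨R, fun i hi ↦ ?_⟩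
  by_contra hclose
  exact hi.not_ge (hR ⟨i, hclose, rfl⟩)

end IsQuasigeodesicZ

namespace IsContractingAxisZ

variable {K : ℝ} {γ : ℤ → X}

lemma dist_projSet_lt (hγ : IsContractingAxisZ K γ) {f : ℝ → X} {x z p q : X}
    (hf : IsGeodesicSegment f x z)
    (hfar : ∀ t ∈ Set.Icc (0 : ℝ) (dist x z), K ≤ Metric.infDist (f t) (Set.range γ))
    (hp : p ∈ projSet (Set.range γ) x) (hq : q ∈ projSet (Set.range γ) z) : dist p q < K := by
  have hx : x ∈ f '' Set.Icc 0 (dist x z) := ⟨0, ⟨le_rfl, dist_nonneg⟩, hf.1⟩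
  have hz : z ∈ f '' Set.Icc 0 (dist x z) := ⟨dist x z, ⟨dist_nonneg, le_rfl⟩, hf.2.1⟩
  have hlt : edist p q < ENNReal.ofReal K :=
    (Metric.edist_le_ediam_of_mem (mem_projSetOf.2 ⟨x, hx, hp⟩)
      (mem_projSetOf.2 ⟨z, hz, hq⟩)).trans_lt (hγ.2 f x z hf hfar)
  rw [edist_dist] at hlt
  exact (ENNReal.ofReal_lt_ofReal_iff_of_nonneg dist_nonneg).1 hlt

-- The geodesic is followed until just before it first comes `K`-close to the axis: up to there
-- the projection has not moved by more than `K`.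
lemma exists_dist_geodesic_le (hK : 0 < K) (hγ : IsContractingAxisZ K γ) {f : ℝ → X}
    {x z p : X} (hf : IsGeodesicSegment f x z)
    (hnear : ∃ t ∈ Set.Icc (0 : ℝ) (dist x z), Metric.infDist (f t) (Set.range γ) < K)
    (hp : p ∈ projSet (Set.range γ) x) :
    ∃ u ∈ Set.Icc (0 : ℝ) (dist x z), dist (f u) p ≤ 3 * K := by
  set T : Set ℝ := {t | t ∈ Set.Icc 0 (dist x z) ∧ Metric.infDist (f t) (Set.range γ) < K}
  have hT : BddBelow T := ⟨0, fun t ht ↦ ht.1.1⟩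
  obtain ⟨t, htT, ht⟩ := exists_lt_of_csInf_lt hnear (lt_add_of_pos_right (sInf T) hK)
  have hu : max 0 (t - K) ∈ Set.Icc 0 (dist x z) :=
    ⟨le_max_left _ _, max_le dist_nonneg (by linarith [htT.1.2])⟩
  refine ⟨max 0 (t - K), hu, ?_⟩
  rcases le_total (t - K) 0 with hle | hle
  · rw [max_eq_left hle, hf.1, hp.2, ← hf.1]
    have hdist := hf.2.2 0 ⟨le_rfl, dist_nonneg⟩ t htT.1
    rw [zero_sub, abs_neg, abs_of_nonneg htT.1.1] at hdist
    linarith [Metric.infDist_le_infDist_add_dist (s := Set.range γ) (x := f 0) (y := f t), htT.2]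
  · rw [max_eq_right hle] at hu ⊢
    obtain ⟨r, hr⟩ := hγ.1.projSet_nonempty hK (f (t - K))
    have hpr : dist p r < K := by
      obtain ⟨hseg, hlen⟩ := hf.restrict_s5 hu
      refine hγ.dist_projSet_lt hseg (fun s hs ↦ ?_) hp hr
      rw [hlen] at hs
      by_contra! hclose
      linarith [csInf_le hT (show s ∈ T from ⟨⟨hs.1, hs.2.trans hu.2⟩, hclose⟩), hs.2]
    have hdist := hf.2.2 (t - K) hu t htT.1
    rw [sub_sub_cancel_left, abs_neg, abs_of_pos hK] at hdist
    linarith [Metric.infDist_le_infDist_add_dist (s := Set.range γ) (x := f (t - K)) (y := f t),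
      htT.2, hr.2, dist_triangle_right (f (t - K)) p r]

lemma gromovProduct_le (hgeo : IsGeodesicSpace X) (hK : 0 < K) (hγ : IsContractingAxisZ K γ)
    {x z p q : X} (hp : p ∈ projSet (Set.range γ) x) (hq : q ∈ projSet (Set.range γ) z)
    (hpq : K ≤ dist p q) : gromovProduct p x z ≤ 3 * K := by
  obtain ⟨f, hf⟩ := hgeo x z
  have hnear : ∃ t ∈ Set.Icc (0 : ℝ) (dist x z), Metric.infDist (f t) (Set.range γ) < K := by
    by_contra! hfar
    exact hpq.not_gt (hγ.dist_projSet_lt hf hfar hp hq)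
  obtain ⟨u, hu, hup⟩ := hγ.exists_dist_geodesic_le hK hf hnear hp
  exact (hf.gromovProduct_le_dist p hu).trans hup

-- A Behrstock-type inequality: a point cannot project far from `o` both to `γ` and to `A`.
lemma dist_projSet_le (hgeo : IsGeodesicSpace X) (hK : 0 < K) (hγ : IsContractingAxisZ K γ)
    {A : Set X} {o : X} (ho : o ∈ A) {D : ℝ}
    (hD : projSetOf (Set.range γ) A ⊆ Metric.closedBall o D) {x p p' : X}
    (hp : p ∈ projSet A x) (hp' : p' ∈ projSet (Set.range γ) x) (hfar : D + K ≤ dist p' o) :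
    dist p o ≤ 2 * D + 6 * K := by
  obtain ⟨r, hr⟩ := hγ.1.projSet_nonempty hK p
  have hrD : dist r o ≤ D := hD (mem_projSetOf.2 ⟨p, hp.1, hr⟩)
  have hgp : gromovProduct r p x ≤ 3 * K :=
    hγ.gromovProduct_le hgeo hK hr hp' (by linarith [dist_triangle_left p' o r])
  unfold gromovProduct at hgp
  linarith [dist_le_of_mem_projSet hp ho, dist_triangle_left p o r, dist_triangle x r o,
    dist_comm x r, dist_comm x p]

lemma exists_forall_dist_projSet_le (hgeo : IsGeodesicSpace X) (hK : 0 < K)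
    (hγ : IsContractingAxisZ K γ) {J : ℝ} (hJ : 0 < J) {η : ℤ → X} (hη : IsQuasigeodesicZ J η)
    {o : X} (ho : o ∈ Set.range η) {D : ℝ}
    (hD : projSetOf (Set.range γ) (Set.range η) ⊆ Metric.closedBall o D) :
    ∃ R : ℕ, ∀ (x : X) (j : ℤ), η j ∈ projSet (Set.range η) x → R < j.natAbs →
      ∃ p ∈ projSet (Set.range γ) x, dist o p ≤ D + K := by
  obtain ⟨R, hR⟩ := hη.exists_forall_lt_dist hJ o (2 * D + 6 * K)
  refine ⟨R, fun x j hj hRj ↦ ?_⟩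
  obtain ⟨p, hp⟩ := hγ.1.projSet_nonempty hK x
  refine ⟨p, hp, ?_⟩
  by_contra! hfar
  rw [dist_comm] at hfar
  have hclose := hγ.dist_projSet_le hgeo hK ho hD hj hp hfar.le
  rw [dist_comm] at hclose
  exact (hR j hRj).not_ge hclose

end IsContractingAxisZ

end Geometry

section Schottky

lemma exists_forall_natAbs_add_mul_le_imp_eq {ι : Type*} [Nonempty ι] {u : ι → ℤ}
    (hu : u.Injective) (R : ℕ) (k : ℤ) :
    ∃ i, ∀ j, (k + u j * (2 * R + 1)).natAbs ≤ R → j = i := by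
  by_cases h : ∃ i, (k + u i * (2 * R + 1)).natAbs ≤ R
  · obtain ⟨i, hi⟩ := h
    refine ⟨i, fun j hj ↦ hu (sub_eq_zero.1 ?_)⟩
    have hdiff : ((u j - u i) * (2 * R + 1)).natAbs < (2 * R + 1 : ℤ).natAbs := by
      rw [sub_mul]
      omega
    rw [Int.natAbs_mul] at hdiff
    exact Int.natAbs_eq_zero.1 (Nat.lt_one_iff.1 (lt_of_mul_lt_mul_right (by rwa [one_mul])
      (Nat.zero_le _)))
  · exact ⟨Classical.arbitrary ι, fun j hj ↦ (h ⟨j, hj⟩).elim⟩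

variable {G X : Type*} [Group G] [MetricSpace X] [MulAction G X]

/-- A quantitative Schottky family for the action of `G` on `X`: for all points `x` and `y`, at
all but two indices `i` a geodesic from `x` to `s i • y` passes within about `C` of `o`. -/
def IsSchottky_s5 (o : X) (C : ℝ) (s : Fin 4 → G) : Prop :=
  ∃ α β : X → Fin 4, ∀ x y i, i ≠ α x → i ≠ β y → gromovProduct o x (s i • y) ≤ C

lemma self_mem_zorbit (o : X) (g : G) : o ∈ zorbit o g := ⟨0, by simp⟩

variable [IsIsometricSMul G X] {o : X} {g h : G} {J K D E : ℝ}

lemma zpow_smul_mem_projSet_zorbit {x p : X} (hp : p ∈ projSet (zorbit o g) x)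
    (k : ℤ) : g ^ k • p ∈ projSet (zorbit o g) (g ^ k • x) := by
  obtain ⟨i, rfl⟩ := hp.1
  refine mem_projSet_of_forall_dist_le ⟨k + i, by simp only [zpow_add, mul_smul]⟩ ?_
  rintro _ ⟨j, rfl⟩
  have hj : g ^ j • o = g ^ k • g ^ (j - k) • o := by
    rw [smul_smul, ← zpow_add, add_sub_cancel]
  simp only [hj, dist_smul]
  exact dist_le_of_mem_projSet hp ⟨j - k, rfl⟩

namespace IsContractingAxisZ

lemma gromovProduct_zpow_smul_le (hgeo : IsGeodesicSpace X) (hK : 0 < K)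
    (hh : IsContractingAxisZ K fun i : ℤ ↦ h ^ i • o) {x y p q : X}
    (hp : p ∈ projSet (zorbit o h) x) (hq : q ∈ projSet (zorbit o h) y)
    (hpE : dist o p ≤ E) (hqE : dist o q ≤ E) {m : ℤ} (hm : 2 * E + K ≤ dist o (h ^ m • o)) :
    gromovProduct o x (h ^ m • y) ≤ E + 3 * K := by
  have hpq : K ≤ dist p (h ^ m • q) := by
    have := dist_smul (h ^ m) q o
    linarith [dist_triangle4 o p (h ^ m • q) (h ^ m • o), dist_comm o q]
  have hgp := hh.gromovProduct_le hgeo hK hp (zpow_smul_mem_projSet_zorbit hq m) hpq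
  linarith [gromovProduct_le_add_dist_base o p x (h ^ m • y)]

-- Distinct multiples of `n` translate `x` to points whose projections to the axis of `g` are far
-- apart, so at most one of these is close to `o`; the others project close to `o` on that of `h`.
lemma exists_forall_ne_imp_dist_projSet_le (ι : Type*) [Nonempty ι] (hgeo : IsGeodesicSpace X)
    (hJ : 0 < J) (hg : IsQuasigeodesicZ J fun i : ℤ ↦ g ^ i • o) (hK : 0 < K)
    (hh : IsContractingAxisZ K fun i : ℤ ↦ h ^ i • o)
    (hD : projSetOf (zorbit o h) (zorbit o g) ⊆ Metric.closedBall o D) :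
    ∃ n : ℕ, 0 < n ∧ ∀ u : ι → ℤ, u.Injective → ∃ α : X → ι, ∀ x i, i ≠ α x →
      ∃ p ∈ projSet (zorbit o h) (g ^ (u i * n) • x), dist o p ≤ D + K := by
  obtain ⟨R, hR⟩ := hh.exists_forall_dist_projSet_le hgeo hK hJ hg (self_mem_zorbit o g) hD
  have hproj (x : X) : ∃ j : ℤ, g ^ j • o ∈ projSet (zorbit o g) x := by
    obtain ⟨p, hp⟩ := hg.projSet_nonempty hJ x
    obtain ⟨j, rfl⟩ := hp.1
    exact ⟨j, hp⟩
  choose j hj using hproj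
  refine ⟨2 * R + 1, by omega, fun u hu ↦ ?_⟩
  choose α hα using fun x ↦ exists_forall_natAbs_add_mul_le_imp_eq hu R (j x)
  refine ⟨α, fun x i hi ↦ hR _ (u i * ↑(2 * R + 1) + j x) ?_ ?_⟩
  · simp only [zpow_add, mul_smul]
    exact zpow_smul_mem_projSet_zorbit (hj x) _
  · by_contra! hle
    exact hi (hα x i (by push_cast at hle; rwa [add_comm]))

-- For most `i` the power of `g` on the left moves `x`, and that on the right moves `y`, to points
-- projecting close to `o` on the axis of `h`, along which `h ^ m` is a long translation. The
-- exponents of `g` add up to `5 * n` so that all elements are words of equal length.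
theorem exists_isSchottky (hgeo : IsGeodesicSpace X) (hJ : 0 < J)
    (hg : IsQuasigeodesicZ J fun i : ℤ ↦ g ^ i • o) (hK : 0 < K)
    (hh : IsContractingAxisZ K fun i : ℤ ↦ h ^ i • o)
    (hbdd : Bornology.IsBounded (projSetOf (zorbit o h) (zorbit o g))) :
    ∃ n m : ℕ, 0 < n ∧ ∃ C, IsSchottky_s5 o C fun i : Fin 4 ↦
      g ^ ((i + 1 : ℕ) * n) * h ^ m * g ^ ((i.rev + 1 : ℕ) * n) := by
  obtain ⟨D, hD⟩ := (Metric.isBounded_iff_subset_closedBall o).1 hbdd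
  obtain ⟨n, hn, hnear⟩ :=
    hh.exists_forall_ne_imp_dist_projSet_le (Fin 4) hgeo hJ hg hK hD
  obtain ⟨m, hm⟩ := hh.1.exists_forall_lt_dist hK o (2 * (D + K) + K)
  obtain ⟨α, hα⟩ := hnear (fun i ↦ -(i + 1 : ℕ)) fun _ _ h ↦ by dsimp only at h; omega
  obtain ⟨β, hβ⟩ := hnear (fun i ↦ (i.rev + 1 : ℕ)) fun _ _ h ↦
    Fin.rev_injective (by dsimp only at h; omega)
  refine ⟨n, m + 1, hn, ∑ i : Fin 4, dist o (g ^ ((i + 1 : ℕ) * n) • o) + (D + K + 3 * K),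
    α, β, fun x y i hi hi' ↦ ?_⟩
  set a := (i + 1 : ℕ) * n with ha
  set b := (i.rev + 1 : ℕ) * n with hb
  obtain ⟨p, hp, hpo⟩ := hα x i hi
  obtain ⟨q, hq, hqo⟩ := hβ y i hi'
  rw [neg_mul, ← Nat.cast_mul, ← ha, zpow_neg, zpow_natCast] at hp
  rw [← Nat.cast_mul, ← hb, zpow_natCast] at hq
  have hmid := hh.gromovProduct_zpow_smul_le hgeo hK hp hq hpo hqo (hm (m + 1 : ℕ) (by omega)).le
  rw [zpow_natCast] at hmid
  have hsum : dist o (g ^ a • o) ≤ ∑ i : Fin 4, dist o (g ^ ((i + 1 : ℕ) * n) • o) :=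
    Finset.single_le_sum (f := fun i : Fin 4 ↦ dist o (g ^ ((i + 1 : ℕ) * n) • o))
      (fun _ _ ↦ dist_nonneg) (Finset.mem_univ i)
  calc gromovProduct o x ((g ^ a * h ^ (m + 1) * g ^ b) • y)
      ≤ dist o (g ^ a • o) + gromovProduct o ((g ^ a)⁻¹ • x) (h ^ (m + 1) • g ^ b • y) := by
        rw [mul_assoc, mul_smul, mul_smul]
        exact gromovProduct_smul_right_le o x _ _
    _ ≤ _ := add_le_add hsum hmid

end IsContractingAxisZ

end Schottky

section Expectation

variable {α β : Type*}

/-- The expectation of a nonnegative function of a random element with law `p`. -/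
noncomputable def expect (p : PMF α) (f : α → ℝ≥0∞) : ℝ≥0∞ :=
  ∑' a, p a * f a

lemma expect_pure (a : α) (f : α → ℝ≥0∞) : expect (PMF.pure a) f = f a := by
  classical
  simp [expect, PMF.pure_apply]

lemma expect_bind (p : PMF α) (q : α → PMF β) (f : β → ℝ≥0∞) :
    expect (p.bind q) f = expect p fun a ↦ expect (q a) f := by
  simp only [expect, PMF.bind_apply, ← ENNReal.tsum_mul_left, ← ENNReal.tsum_mul_right, mul_assoc]
  exact ENNReal.tsum_comm

lemma expect_map (φ : α → β) (p : PMF α) (f : β → ℝ≥0∞) :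
    expect (p.map φ) f = expect p fun a ↦ f (φ a) := by
  rw [← PMF.bind_pure_comp, expect_bind]
  simp only [Function.comp_apply, expect_pure]

lemma expect_const (p : PMF α) (c : ℝ≥0∞) : expect p (fun _ ↦ c) = c := by
  rw [expect, ENNReal.tsum_mul_right, p.tsum_coe, one_mul]

lemma expect_add (p : PMF α) (f g : α → ℝ≥0∞) :
    expect p (fun a ↦ f a + g a) = expect p f + expect p g := by
  simp only [expect, mul_add, ENNReal.tsum_add]

lemma expect_const_mul (p : PMF α) (c : ℝ≥0∞) (f : α → ℝ≥0∞) :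
    expect p (fun a ↦ c * f a) = c * expect p f := by
  simp only [expect, ← ENNReal.tsum_mul_left, mul_left_comm]

lemma expect_mul_const (p : PMF α) (c : ℝ≥0∞) (f : α → ℝ≥0∞) :
    expect p (fun a ↦ f a * c) = expect p f * c := by
  simp only [expect, ← ENNReal.tsum_mul_right, mul_assoc]

lemma expect_mono (p : PMF α) {f g : α → ℝ≥0∞} (h : ∀ a, f a ≤ g a) :
    expect p f ≤ expect p g :=
  ENNReal.tsum_le_tsum fun a ↦ mul_le_mul_right (h a) _

lemma expect_comm (p : PMF α) (q : PMF β) (f : α → β → ℝ≥0∞) :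
    (expect p fun a ↦ expect q fun b ↦ f a b) = expect q fun b ↦ expect p fun a ↦ f a b := by
  simp only [expect, ← ENNReal.tsum_mul_left, mul_left_comm]
  exact ENNReal.tsum_comm

lemma apply_le_map_apply (p : PMF α) (φ : α → β) (a : α) : p a ≤ p.map φ (φ a) := by
  rw [PMF.map_apply]
  exact (if_pos rfl).ge.trans (ENNReal.le_tsum a)

/-- The joint law of independent random elements with the given laws. -/
noncomputable def jointLaw : List (PMF α) → PMF (List α)
  | [] => PMF.pure []
  | p :: ps => p.bind fun a ↦ (jointLaw ps).map (a :: ·)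

lemma expect_jointLaw_nil (f : List α → ℝ≥0∞) : expect (jointLaw []) f = f [] :=
  expect_pure _ _

lemma expect_jointLaw_cons (p : PMF α) (ps : List (PMF α)) (f : List α → ℝ≥0∞) :
    expect (jointLaw (p :: ps)) f =
      expect p fun a ↦ expect (jointLaw ps) fun l ↦ f (a :: l) := by
  simp only [jointLaw, expect_bind, expect_map]

lemma jointLaw_map (φ : α → β) (ps : List (PMF α)) :
    jointLaw (ps.map (PMF.map φ)) = (jointLaw ps).map (List.map φ) := by
  induction ps with
  | nil => simp only [List.map_nil, jointLaw, PMF.pure_map]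
  | cons p ps ih =>
    simp only [List.map_cons, jointLaw, ih, PMF.bind_map, PMF.map_bind, PMF.map_comp,
      Function.comp_def, List.map_cons]

lemma expect_jointLaw_ofFn {n : ℕ} (P : Fin n → PMF α) (f : List α → ℝ≥0∞) :
    expect (jointLaw (List.ofFn P)) f =
      ∑' z : Fin n → α, (∏ i, P i (z i)) * f (List.ofFn z) := by
  induction n generalizing f with
  | zero => simp [expect_jointLaw_nil]
  | succ n ih =>
    rw [List.ofFn_succ, expect_jointLaw_cons, ← (Fin.consEquiv fun _ ↦ α).tsum_eq,
      ENNReal.tsum_prod']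
    simp only [ih]
    simp only [expect, ← ENNReal.tsum_mul_left, ← mul_assoc, Fin.consEquiv_apply,
      Fin.prod_univ_succ, Fin.cons_zero, Fin.cons_succ, List.ofFn_succ]

section Walk

variable {M : Type*} [Monoid M]

/-- The law of the product of independent random elements with the given laws. -/
noncomputable def walkLaw (ps : List (PMF M)) : PMF M :=
  (jointLaw ps).map List.prod

lemma walkLaw_nil : walkLaw ([] : List (PMF M)) = PMF.pure 1 := by
  rw [walkLaw, jointLaw, PMF.pure_map, List.prod_nil]

lemma walkLaw_cons (p : PMF M) (ps : List (PMF M)) :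
    walkLaw (p :: ps) = p.bind fun a ↦ (walkLaw ps).map (a * ·) := by
  simp only [walkLaw, jointLaw, PMF.map_bind, PMF.map_comp, Function.comp_def, List.prod_cons]

lemma walkLaw_append (ps qs : List (PMF M)) :
    walkLaw (ps ++ qs) = (walkLaw ps).bind fun a ↦ (walkLaw qs).map (a * ·) := by
  induction ps with
  | nil =>
    simp only [List.nil_append, walkLaw_nil, PMF.pure_bind, one_mul]
    exact (PMF.map_id _).symm
  | cons p ps ih =>
    simp only [List.cons_append, walkLaw_cons, ih, PMF.bind_bind, PMF.bind_map, PMF.map_bind,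
      PMF.map_comp, Function.comp_def, mul_assoc]

lemma walkLaw_flatten (pss : List (List (PMF M))) :
    walkLaw pss.flatten = walkLaw (pss.map walkLaw) := by
  induction pss with
  | nil => rw [List.flatten_nil, List.map_nil]
  | cons ps pss ih => rw [List.flatten_cons, walkLaw_append, ih, List.map_cons, walkLaw_cons]

lemma expect_walkLaw_append (ps qs : List (PMF M)) (f : M → ℝ≥0∞) :
    expect (walkLaw (ps ++ qs)) f =
      expect (walkLaw ps) fun a ↦ expect (walkLaw qs) fun b ↦ f (a * b) := by
  simp only [walkLaw_append, expect_bind, expect_map]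

lemma pow_length_le_walkLaw {c : ℝ≥0∞} {S : Set M} {ps : List (PMF M)}
    (hps : ∀ p ∈ ps, ∀ a ∈ S, c ≤ p a) {t : M} (ht : t ∈ S ^ ps.length) :
    c ^ ps.length ≤ walkLaw ps t := by
  induction ps generalizing t with
  | nil => simp_all [walkLaw_nil]
  | cons p ps ih =>
    rw [List.length_cons, pow_succ'] at ht ⊢
    obtain ⟨a, ha, b, hb, rfl⟩ := Set.mem_mul.1 ht
    rw [walkLaw_cons, PMF.bind_apply]
    exact (mul_le_mul' (hps p List.mem_cons_self a ha)
      ((ih (fun q hq ↦ hps q (List.mem_cons_of_mem _ hq)) hb).trans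
        (apply_le_map_apply _ (a * ·) b))).trans (ENNReal.le_tsum a)

end Walk

end Expectation

section RandomWalk

variable {G X Ω : Type*} [Group G] [MetricSpace X] [MulAction G X]

/-- The expected displacement of the point `o` by a random element with law `p`. -/
noncomputable def meanDisplacement (o : X) (p : PMF G) : ℝ≥0∞ :=
  expect p fun g ↦ edist o (g • o)

/-- The expected Gromov product, based at `o`, of `x` and the translate of `o` by a random element
with law `p`. -/
noncomputable def meanGromovProduct (o x : X) (p : PMF G) : ℝ≥0∞ :=
  expect p fun g ↦ ENNReal.ofReal (gromovProduct o x (g • o))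

/-- The total displacement of the path with steps `φ ω`, for the labels `ω` in the list, where
each step is discounted by the weights `a` of the earlier ones. These are evaluated at the point
`x` as seen from the path before the step. -/
noncomputable def discountedPast (φ : Ω → G) (o : X) (a : X → Ω → ℝ≥0∞) : X → List Ω → ℝ≥0∞
  | _, [] => 0
  | x, ω :: l => edist o (φ ω • o) + a x ω * discountedPast φ o a ((φ ω)⁻¹ • x) l

/-- The analogue of `discountedPast` with weights `b` that are evaluated at the endpoint of the
path as seen from it after the step. -/
noncomputable def discountedFuture (φ : Ω → G) (o : X) (b : X → Ω → ℝ≥0∞) : List Ω → ℝ≥0∞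
  | [] => 0
  | ω :: l => edist o (φ ω • o) + b ((l.map φ).prod • o) ω * discountedFuture φ o b l

variable {φ : Ω → G} {o : X} {a b : X → Ω → ℝ≥0∞} {ws : List (PMF Ω)} {M r T : ℝ≥0∞}

lemma expect_discountedPast_le (hM : ∀ w ∈ ws, meanDisplacement o (w.map φ) ≤ M)
    (ha : ∀ w ∈ ws, ∀ x, expect w (a x) ≤ r) (hT : M + r * T ≤ T) (x : X) :
    expect (jointLaw ws) (discountedPast φ o a x) ≤ T := by
  induction ws generalizing x with
  | nil => simp only [expect_jointLaw_nil, discountedPast, zero_le]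
  | cons w ws ih =>
    simp only [List.forall_mem_cons] at hM ha
    calc expect (jointLaw (w :: ws)) (discountedPast φ o a x)
        = meanDisplacement o (w.map φ) + expect w fun ω ↦
            a x ω * expect (jointLaw ws) (discountedPast φ o a ((φ ω)⁻¹ • x)) := by
          simp only [expect_jointLaw_cons, discountedPast, expect_add, expect_const,
            expect_const_mul, meanDisplacement, expect_map]
      _ ≤ meanDisplacement o (w.map φ) + expect w (a x) * T := by
          rw [← expect_mul_const]
          gcongr
          exact expect_mono _ fun ω ↦ mul_le_mul_right (ih hM.2 ha.2 _) _
      _ ≤ M + r * T := by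
          gcongr
          exacts [hM.1, ha.1 x]
      _ ≤ T := hT

lemma expect_discountedFuture_le (hM : ∀ w ∈ ws, meanDisplacement o (w.map φ) ≤ M)
    (hb : ∀ w ∈ ws, ∀ y, expect w (b y) ≤ r) (hT : M + r * T ≤ T) :
    expect (jointLaw ws) (discountedFuture φ o b) ≤ T := by
  induction ws with
  | nil => simp only [expect_jointLaw_nil, discountedFuture, zero_le]
  | cons w ws ih =>
    simp only [List.forall_mem_cons] at hM hb
    calc expect (jointLaw (w :: ws)) (discountedFuture φ o b)
        = meanDisplacement o (w.map φ) + expect (jointLaw ws) fun l ↦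
            expect w (b ((l.map φ).prod • o)) * discountedFuture φ o b l := by
          rw [expect_jointLaw_cons, expect_comm]
          simp only [discountedFuture, expect_add, expect_const, expect_mul_const,
            meanDisplacement, expect_map]
      _ ≤ M + r * expect (jointLaw ws) (discountedFuture φ o b) := by
          rw [← expect_const_mul]
          gcongr
          exacts [hM.1, expect_mono _ fun l ↦ mul_le_mul_left (hb.1 _) _]
      _ ≤ M + r * T := by
          gcongr
          exact ih hM.2 hb.2
      _ ≤ T := hT

variable [IsIsometricSMul G X]

lemma meanDisplacement_walkLaw_le {ps : List (PMF G)} (hM : ∀ p ∈ ps, meanDisplacement o p ≤ M) :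
    meanDisplacement o (walkLaw ps) ≤ ps.length * M := by
  induction ps with
  | nil => simp [meanDisplacement, walkLaw_nil, expect_pure]
  | cons p ps ih =>
    simp only [List.forall_mem_cons] at hM
    have hmul (g h : G) : edist o ((g * h) • o) ≤ edist o (g • o) + edist o (h • o) := by
      rw [← edist_smul_left g o (h • o), ← mul_smul]
      exact edist_triangle _ _ _
    calc meanDisplacement o (walkLaw (p :: ps))
        = expect p fun g ↦ expect (walkLaw ps) fun h ↦ edist o ((g * h) • o) := by
          simp only [meanDisplacement, walkLaw_cons, expect_bind, expect_map]
      _ ≤ expect p fun g ↦ expect (walkLaw ps) fun h ↦ edist o (g • o) + edist o (h • o) :=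
          expect_mono _ fun g ↦ expect_mono _ (hmul g)
      _ = meanDisplacement o p + meanDisplacement o (walkLaw ps) := by
          simp only [expect_add, expect_const, meanDisplacement]
      _ ≤ M + ps.length * M := add_le_add hM.1 (ih hM.2)
      _ = (p :: ps).length * M := by
          rw [List.length_cons, Nat.cast_add_one, add_one_mul, add_comm]

-- The product `A * B` accumulates the weights of the steps taken so far: as soon as one of these
-- was good the path has passed close to `o`, and otherwise `A` or `B` is still at least `1`.
lemma ofReal_gromovProduct_prod_smul_le {C : ℝ≥0∞}
    (hab : ∀ x y ω, ENNReal.ofReal (gromovProduct o x (φ ω • y)) ≤ C ∨ 1 ≤ a x ω * b y ω)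
    {A B : ℝ≥0∞} (hAB : 1 ≤ A * B) (x : X) (l : List Ω) :
    ENNReal.ofReal (gromovProduct o x ((l.map φ).prod • o)) ≤
      C + (A * discountedPast φ o a x l + B * discountedFuture φ o b l) := by
  induction l generalizing x A B with
  | nil => simp [gromovProduct, dist_comm x o]
  | cons ω l ih =>
    rw [List.map_cons, List.prod_cons, mul_smul]
    set y := (l.map φ).prod • o with hy
    obtain hgood | hbad := hab x y ω
    · exact hgood.trans le_self_add
    have hone : 1 ≤ A + B := by
      by_contra! hlt
      exact hAB.not_gt ((mul_le_of_le_one_right' ((le_add_self).trans hlt.le)).trans_lt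
        (le_self_add.trans_lt hlt))
    have hmul : 1 ≤ (A * a x ω) * (B * b y ω) := by
      rw [mul_mul_mul_comm]
      exact one_le_mul hAB hbad
    calc ENNReal.ofReal (gromovProduct o x (φ ω • y))
        ≤ edist o (φ ω • o) + ENNReal.ofReal (gromovProduct o ((φ ω)⁻¹ • x) y) := by
          rw [edist_dist, ← ENNReal.ofReal_add dist_nonneg (gromovProduct_nonneg _ _ _)]
          exact ENNReal.ofReal_le_ofReal (gromovProduct_smul_right_le o x y (φ ω))
      _ ≤ (A + B) * edist o (φ ω • o) + (C + (A * a x ω * discountedPast φ o a ((φ ω)⁻¹ • x) l +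
            B * b y ω * discountedFuture φ o b l)) :=
          add_le_add (le_mul_of_one_le_left' hone) (ih hmul _)
      _ = C + (A * discountedPast φ o a x (ω :: l) + B * discountedFuture φ o b (ω :: l)) := by
          simp only [discountedPast, discountedFuture, ← hy]
          ring

lemma meanGromovProduct_walkLaw_le {C : ℝ≥0∞}
    (hab : ∀ x y ω, ENNReal.ofReal (gromovProduct o x (φ ω • y)) ≤ C ∨ 1 ≤ a x ω * b y ω)
    (hM : ∀ w ∈ ws, meanDisplacement o (w.map φ) ≤ M)
    (ha : ∀ w ∈ ws, ∀ x, expect w (a x) ≤ r) (hb : ∀ w ∈ ws, ∀ y, expect w (b y) ≤ r)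
    (hT : M + r * T ≤ T) (x : X) :
    meanGromovProduct o x (walkLaw (ws.map (PMF.map φ))) ≤ C + (T + T) :=
  calc meanGromovProduct o x (walkLaw (ws.map (PMF.map φ)))
      = expect (jointLaw ws) fun l ↦
          ENNReal.ofReal (gromovProduct o x ((l.map φ).prod • o)) := by
        simp only [meanGromovProduct, walkLaw, jointLaw_map, expect_map]
    _ ≤ expect (jointLaw ws) fun l ↦
          C + (discountedPast φ o a x l + discountedFuture φ o b l) :=
        expect_mono _ fun l ↦ by
          simpa only [one_mul] using
            ofReal_gromovProduct_prod_smul_le hab (A := 1) (B := 1) (by simp) x l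
    _ ≤ C + (T + T) := by
        simp only [expect_add, expect_const]
        gcongr
        exacts [expect_discountedPast_le hM ha hT x, expect_discountedFuture_le hM hb hT]

lemma meanGromovProduct_walkLaw_append_le (ps qs : List (PMF G)) (x : X) :
    meanGromovProduct o x (walkLaw (ps ++ qs)) ≤
      meanGromovProduct o x (walkLaw ps) + meanDisplacement o (walkLaw qs) := by
  have hmul (g h : G) : ENNReal.ofReal (gromovProduct o x ((g * h) • o)) ≤
      ENNReal.ofReal (gromovProduct o x (g • o)) + edist o (h • o) := by
    rw [edist_dist, ← ENNReal.ofReal_add (gromovProduct_nonneg _ _ _) dist_nonneg,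
      ← dist_smul g o (h • o), ← mul_smul]
    exact ENNReal.ofReal_le_ofReal (gromovProduct_le_add_dist_right _ _ _ _)
  calc meanGromovProduct o x (walkLaw (ps ++ qs))
      ≤ expect (walkLaw ps) fun g ↦ expect (walkLaw qs) fun h ↦
          ENNReal.ofReal (gromovProduct o x (g • o)) + edist o (h • o) := by
        rw [meanGromovProduct, expect_walkLaw_append]
        exact expect_mono _ fun g ↦ expect_mono _ (hmul g)
    _ = meanGromovProduct o x (walkLaw ps) + meanDisplacement o (walkLaw qs) := by
        simp only [expect_add, expect_const, meanGromovProduct, meanDisplacement]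

end RandomWalk

section Labelling

variable {α ι : Type*}

lemma tsum_sum_elim [Fintype ι] (f : α ⊕ ι → ℝ≥0∞) :
    ∑' w, f w = ∑' a, f (.inl a) + ∑ i, f (.inr i) := by
  rw [ENNReal.summable.tsum_sum ENNReal.summable, tsum_fintype (L := .unconditional ι)]

lemma exists_map_sumElim_eq [Fintype ι] {p : PMF α} {s : ι → α} {κ : ℝ≥0∞}
    (hκ : ∀ i, Fintype.card ι * κ ≤ p (s i)) :
    ∃ q : PMF (α ⊕ ι), (∀ i, q (.inr i) = κ) ∧ q.map (Sum.elim id s) = p := by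
  classical
  have hle (a : α) : ∑ i, (if a = s i then κ else 0) ≤ p a := by
    by_cases ha : ∃ i, a = s i
    · obtain ⟨i, rfl⟩ := ha
      refine le_trans ?_ (hκ i)
      rw [← nsmul_eq_mul, ← Finset.card_univ]
      exact Finset.sum_le_card_nsmul _ _ _ fun j _ ↦ by split_ifs <;> simp
    · push Not at ha
      simp [ha]
  choose r hr using fun a ↦ exists_add_of_le (hle a)
  have hsum : ∑' w, Sum.elim r (fun _ : ι ↦ κ) w = 1 := by
    simp only [tsum_sum_elim, Sum.elim_inl, Sum.elim_inr, ← p.tsum_coe, hr, ENNReal.tsum_add]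
    rw [Summable.tsum_finsetSum fun _ _ ↦ ENNReal.summable]
    simp only [tsum_ite_eq, add_comm]
  obtain ⟨q, hq⟩ : ∃ q : PMF (α ⊕ ι), ⇑q = Sum.elim r fun _ ↦ κ :=
    ⟨⟨_, ENNReal.summable.hasSum_iff.2 hsum⟩, rfl⟩
  refine ⟨q, fun i ↦ by rw [hq, Sum.elim_inr], PMF.ext fun a ↦ ?_⟩
  rw [PMF.map_apply, tsum_sum_elim, hr a, add_comm]
  simp only [hq, Sum.elim_inl, Sum.elim_inr, id, eq_comm (a := a), tsum_ite_eq]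

end Labelling

lemma exists_eq_flatten_append {α : Type*} {N : ℕ} (hN : 0 < N) (l : List α) :
    ∃ (L : List (List α)) (r : List α),
      (∀ b ∈ L, b.length = N) ∧ r.length < N ∧ l = L.flatten ++ r := by
  induction h : l.length using Nat.strong_induction_on generalizing l with
  | _ n ih =>
    obtain hlt | hle := lt_or_ge l.length N
    · exact ⟨[], l, by simp, hlt, by simp⟩
    · obtain ⟨L, r, hL, hr, hdrop⟩ := ih (l.drop N).length (by simp; omega) (l.drop N) rfl
      refine ⟨l.take N :: L, r, List.forall_mem_cons.2 ⟨by simpa using hle, hL⟩, hr, ?_⟩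
      rw [List.flatten_cons, List.append_assoc, ← hdrop, List.take_append_drop]

section SchottkyWalk

variable {G X : Type*}

/-- The weight of a step with the given label: it is doubled when `.inr i` is the bad index at
`x`, halved at the other indices, and neutral for the unmarked steps `.inl g`. -/
noncomputable def schottkyWeight (α : X → Fin 4) (x : X) : G ⊕ Fin 4 → ℝ≥0∞
  | .inl _ => 1
  | .inr i => if i = α x then 2 else 2⁻¹

lemma one_le_schottkyWeight_mul {α β : X → Fin 4} {x y : X} {i : Fin 4}
    (h : i = α x ∨ i = β y) :
    1 ≤ schottkyWeight (G := G) α x (.inr i) * schottkyWeight (G := G) β y (.inr i) := by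
  have hinv : (2 : ℝ≥0∞) * 2⁻¹ = 1 := ENNReal.mul_inv_cancel (by simp) (by simp)
  simp only [schottkyWeight]
  split_ifs <;> simp_all [mul_comm]

lemma expect_schottkyWeight_add (α : X → Fin 4) (x : X) {q : PMF (G ⊕ Fin 4)} {κ : ℝ≥0∞}
    (hq : ∀ i, q (.inr i) = 2 * κ) : expect q (schottkyWeight α x) + κ = 1 := by
  have hinv : (2 : ℝ≥0∞) * κ * 2⁻¹ = κ := by
    rw [mul_right_comm, ENNReal.mul_inv_cancel (by simp) (by simp), one_mul]
  rw [← q.tsum_coe, expect, tsum_sum_elim, tsum_sum_elim, add_assoc]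
  simp only [schottkyWeight, mul_one, hq]
  congr 1
  generalize α x = k
  fin_cases k <;> simp [Fin.sum_univ_four, hinv] <;> ring

variable [Group G] [MetricSpace X] [MulAction G X] [IsIsometricSMul G X] {o : X}
  {M : ℝ≥0∞} {C : ℝ} {s : Fin 4 → G} {ps : List (PMF G)}

namespace IsSchottky_s5

lemma meanGromovProduct_walkLaw_le (hs : IsSchottky_s5 o C s) {κ : ℝ≥0∞} (hκ : κ ≠ 0)
    (hκ' : κ ≤ 1) (hps : ∀ p ∈ ps, meanDisplacement o p ≤ M ∧ ∀ i, 8 * κ ≤ p (s i)) (x : X) :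
    meanGromovProduct o x (walkLaw ps) ≤ ENNReal.ofReal C + (M / κ + M / κ) := by
  obtain ⟨α, β, hαβ⟩ := hs
  have hlabel (p : PMF G) (hp : p ∈ ps) :
      ∃ q : PMF (G ⊕ Fin 4), (∀ i, q (.inr i) = 2 * κ) ∧ q.map (Sum.elim id s) = p := by
    refine exists_map_sumElim_eq fun i ↦ le_trans (le_of_eq ?_) ((hps p hp).2 i)
    rw [Fintype.card_fin, ← mul_assoc]
    norm_num
  choose! label hlabel using hlabel
  have hmap : (ps.map label).map (PMF.map (Sum.elim id s)) = ps := by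
    rw [List.map_map]
    exact (List.map_congr_left fun p hp ↦ (hlabel p hp).2).trans (List.map_id _)
  have hweight (γ : X → Fin 4) : ∀ w ∈ ps.map label, ∀ y,
      expect w (schottkyWeight γ y) ≤ 1 - κ := by
    rw [List.forall_mem_map]
    exact fun p hp y ↦ ENNReal.le_sub_of_add_le_right (ne_top_of_le_ne_top ENNReal.one_ne_top hκ')
      (expect_schottkyWeight_add γ y (hlabel p hp).1).le
  rw [← hmap]
  refine _root_.meanGromovProduct_walkLaw_le (a := schottkyWeight α) (b := schottkyWeight β)
    (fun y z w ↦ ?_) (M := M) ?_ (hweight α) (hweight β) ?_ x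
  · obtain g | i := w
    · exact .inr (by simp [schottkyWeight])
    · by_cases hi : i = α y ∨ i = β z
      · exact .inr (one_le_schottkyWeight_mul hi)
      · push Not at hi
        exact .inl (ENNReal.ofReal_le_ofReal (hαβ y z i hi.1 hi.2))
  · rw [List.forall_mem_map]
    exact fun p hp ↦ by rw [(hlabel p hp).2]; exact (hps p hp).1
  · have hκ_top : κ ≠ ⊤ := ne_top_of_le_ne_top ENNReal.one_ne_top hκ'
    calc M + (1 - κ) * (M / κ) = (κ + (1 - κ)) * (M / κ) := by
          rw [add_mul, ENNReal.mul_div_cancel hκ hκ_top]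
      _ ≤ M / κ := by rw [add_tsub_cancel_of_le hκ', one_mul]

lemma meanGromovProduct_walkLaw_le_of_mem_pow (hs : IsSchottky_s5 o C s) {S : Set G} {N : ℕ}
    (hN : 0 < N) (hsS : ∀ i, s i ∈ S ^ N) {c : ℝ≥0∞} (hc : c ≠ 0) (hc' : c ≤ 1)
    (hps : ∀ p ∈ ps, meanDisplacement o p ≤ M ∧ ∀ g ∈ S, c ≤ p g) (x : X) :
    meanGromovProduct o x (walkLaw ps) ≤
      ENNReal.ofReal C + (N * M / (c ^ N / 8) + N * M / (c ^ N / 8)) + N * M := by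
  obtain ⟨blocks, rest, hlen, hrest, rfl⟩ := exists_eq_flatten_append hN ps
  simp only [List.mem_append, List.mem_flatten] at hps
  refine (meanGromovProduct_walkLaw_append_le _ _ x).trans (add_le_add ?_ ?_)
  · rw [walkLaw_flatten]
    refine hs.meanGromovProduct_walkLaw_le (by simp [hc])
      (ENNReal.div_le_of_le_mul ((pow_le_one' hc' N).trans (by norm_num))) ?_ x
    rw [List.forall_mem_map]
    intro qs hqs
    have hmem (p) (hp : p ∈ qs) := hps p (.inl ⟨qs, hqs, hp⟩)
    rw [ENNReal.mul_div_cancel (by simp) (by simp), ← hlen qs hqs]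
    refine ⟨meanDisplacement_walkLaw_le fun p hp ↦ (hmem p hp).1, fun i ↦
      pow_length_le_walkLaw (fun p hp ↦ (hmem p hp).2) ?_⟩
    rw [hlen qs hqs]
    exact hsS i
  · calc meanDisplacement o (walkLaw rest)
        ≤ rest.length * M := meanDisplacement_walkLaw_le fun p hp ↦ (hps p (.inr hp)).1
      _ ≤ N * M := by gcongr

end IsSchottky_s5

end SchottkyWalk

lemma exists_mem_superlevel_pow {M : Type*} [Monoid M] {μ : M → ℝ} {g : M}
    (hg : g ∈ Subsemigroup.closure {x | 0 < μ x}) :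
    ∃ k : ℕ, ∃ ε > 0, g ∈ {x | ε ≤ μ x} ^ (k + 1) := by
  induction hg using Subsemigroup.closure_induction with
  | mem x hx => exact ⟨0, μ x, hx, by simp⟩
  | mul x y _ _ hx hy =>
    obtain ⟨k, ε, hε, hx⟩ := hx
    obtain ⟨l, δ, hδ, hy⟩ := hy
    refine ⟨k + 1 + l, min ε δ, lt_min hε hδ, ?_⟩
    rw [add_assoc, pow_add]
    exact Set.mul_mem_mul
      (Set.pow_subset_pow_left (fun z hz ↦ (min_le_left ε δ).trans hz) hx)
      (Set.pow_subset_pow_left (fun z hz ↦ (min_le_right ε δ).trans hz) hy)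

namespace NonElementary

variable {G X : Type*} [Group G] [MetricSpace X] [MulAction G X] {o : X} {μ : G → ℝ}

lemma exists_isSchottky_mem_pow [IsIsometricSMul G X] (hne : NonElementary o μ)
    (hgeo : IsGeodesicSpace X) :
    ∃ ε > 0, ∃ N : ℕ, 0 < N ∧ ∃ (C : ℝ) (s : Fin 4 → G),
      IsSchottky_s5 o C s ∧ ∀ i, s i ∈ {x | ε ≤ μ x} ^ N := by
  obtain ⟨g, h, hg, hh, ⟨J, hJ, hgJ⟩, ⟨K, hK, hhK⟩, -, hbdd⟩ := hne
  obtain ⟨n, m, hn, C, hs⟩ :=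
    hhK.exists_isSchottky hgeo (one_pos.trans hJ) hgJ.1 (one_pos.trans hK) hbdd
  obtain ⟨k, ε, hε, hg⟩ := exists_mem_superlevel_pow hg
  obtain ⟨l, δ, hδ, hh⟩ := exists_mem_superlevel_pow hh
  replace hg : g ∈ {x | min ε δ ≤ μ x} ^ (k + 1) :=
    Set.pow_subset_pow_left (fun z hz ↦ (min_le_left ε δ).trans hz) hg
  replace hh : h ∈ {x | min ε δ ≤ μ x} ^ (l + 1) :=
    Set.pow_subset_pow_left (fun z hz ↦ (min_le_right ε δ).trans hz) hh
  refine ⟨min ε δ, lt_min hε hδ, 5 * n * (k + 1) + m * (l + 1), by positivity, C, _, hs,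
    fun i ↦ ?_⟩
  have hexp : 5 * n * (k + 1) + m * (l + 1) = (k + 1) * ((i + 1 : ℕ) * n) + (l + 1) * m +
      (k + 1) * ((i.rev + 1 : ℕ) * n) := by
    have hi : (i + 1 : ℕ) + (i.rev + 1 : ℕ) = 5 := by rw [Fin.val_rev]; omega
    rw [← hi]
    ring
  have hpow {x : G} {a : ℕ} (hx : x ∈ {x | min ε δ ≤ μ x} ^ a) (b : ℕ) :
      x ^ b ∈ {x | min ε δ ≤ μ x} ^ (a * b) := by
    rw [pow_mul]
    exact Set.pow_mem_pow hx
  rw [hexp, pow_add, pow_add]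
  exact Set.mul_mem_mul (Set.mul_mem_mul (hpow hg _) (hpow hh _)) (hpow hg _)

theorem exists_meanGromovProduct_walkLaw_le [IsIsometricSMul G X] (hne : NonElementary o μ)
    (hgeo : IsGeodesicSpace X) {M : ℝ≥0∞} (hM : M ≠ ⊤) :
    ∃ B ≠ ⊤, ∃ ε > 0, ∀ ps : List (PMF G),
      (∀ p ∈ ps, meanDisplacement o p ≤ M ∧ ∀ g, ENNReal.ofReal (μ g - ε) ≤ p g) →
        ∀ x, meanGromovProduct o x (walkLaw ps) ≤ B := by
  obtain ⟨ε, hε, N, hN, C, s, hs, hsN⟩ := hne.exists_isSchottky_mem_pow hgeo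
  set c : ℝ≥0∞ := min (ENNReal.ofReal (ε / 2)) 1 with hc
  have hc_pos : c ≠ 0 := by simp [hc, hε]
  have hNM : (N : ℝ≥0∞) * M ≠ ⊤ := ENNReal.mul_ne_top (ENNReal.natCast_ne_top N) hM
  have hT : N * M / (c ^ N / 8) ≠ ⊤ := ENNReal.div_ne_top hNM (by simp [hc_pos])
  refine ⟨_, by finiteness, ε / 2, half_pos hε, fun ps hps ↦
    hs.meanGromovProduct_walkLaw_le_of_mem_pow hN hsN hc_pos (min_le_right _ _)
      fun p hp ↦ ⟨(hps p hp).1, fun g hg ↦ ?_⟩⟩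
  calc c ≤ ENNReal.ofReal (ε / 2) := min_le_left _ _
    _ ≤ ENNReal.ofReal (μ g - ε / 2) :=
        ENNReal.ofReal_le_ofReal (by linarith [show ε ≤ μ g from hg])
    _ ≤ p g := (hps p hp).2 g

end NonElementary

section Inversion

variable {G X : Type*} [Group G]

lemma prod_map_inv (l : List G) : (l.map (·⁻¹)).prod = l.reverse.prod⁻¹ := by
  rw [List.prod_inv_reverse, List.map_reverse, List.reverse_reverse]

lemma pmf_map_inv_apply (p : PMF G) (g : G) : p.map (·⁻¹) g = p g⁻¹ := by
  rw [PMF.map_apply, tsum_eq_single g⁻¹ fun a ha ↦ if_neg fun h ↦ ha (by rw [h, inv_inv]),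
    if_pos (inv_inv g).symm]

variable [MetricSpace X] [MulAction G X] {o : X} {g : G} {μ : G → ℝ}

lemma zorbit_inv (o : X) (g : G) : zorbit o g⁻¹ = zorbit o g := by
  rw [zorbit, zorbit, ← (Equiv.neg ℤ).surjective.range_comp]
  simp only [Function.comp_def, Equiv.neg_apply, zpow_neg, inv_zpow, inv_inv]

lemma IsContractingIsom.inv (hg : IsContractingIsom o g) : IsContractingIsom o g⁻¹ := by
  obtain ⟨K, hK, hquasi, hproj⟩ := hg
  refine ⟨K, hK, fun s t ↦ ?_, by rwa [← zorbit, zorbit_inv]⟩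
  simpa only [inv_zpow', Int.cast_neg, neg_sub_neg, abs_sub_comm (t : ℝ)] using hquasi (-s) (-t)

lemma NonElementary.inv (hne : NonElementary o μ) : NonElementary o fun g ↦ μ g⁻¹ := by
  obtain ⟨g, h, hg, hh, hgc, hhc, hgh, hhg⟩ := hne
  have hclosure (x : G) (hx : x ∈ Subsemigroup.closure {x | 0 < μ x}) :
      x⁻¹ ∈ Subsemigroup.closure {x | 0 < μ x⁻¹} := by
    induction hx using Subsemigroup.closure_induction with
    | mem x hx => exact Subsemigroup.subset_closure (by simpa using hx)
    | mul x y _ _ hx hy => rw [mul_inv_rev]; exact mul_mem hy hx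
  refine ⟨g⁻¹, h⁻¹, hclosure g hg, hclosure h hh, hgc.inv, hhc.inv, ?_, ?_⟩ <;>
    rwa [zorbit_inv, zorbit_inv]

lemma dist_inv_smul_self [IsIsometricSMul G X] (o : X) (g : G) :
    dist o (g⁻¹ • o) = dist o (g • o) := by
  rw [← dist_smul g, smul_inv_smul, dist_comm]

lemma meanDisplacement_map_inv [IsIsometricSMul G X] (o : X) (p : PMF G) :
    meanDisplacement o (p.map (·⁻¹)) = meanDisplacement o p := by
  simp only [meanDisplacement, expect_map, edist_dist, dist_inv_smul_self]

end Inversion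

section Defect

variable {G X : Type*} [Group G] [MetricSpace X] [MulAction G X] {o : X}

lemma defect_eq_gromovProduct_add [IsIsometricSMul G X] (o : X) (a g c : G) :
    defect o a g c = 2 * gromovProduct o (g • o) (a⁻¹ • o) +
      2 * gromovProduct o ((a * g)⁻¹ • o) (c • o) := by
  have hleft : dist (g • o) (a⁻¹ • o) = dist o ((a * g) • o) := by
    rw [← dist_smul a, smul_inv_smul, ← mul_smul, dist_comm]
  have hright : dist ((a * g)⁻¹ • o) (c • o) = dist o ((a * g * c) • o) := by
    rw [← dist_smul (a * g), smul_inv_smul, ← mul_smul]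
  simp only [defect, gromovProduct, hleft, hright, dist_inv_smul_self]
  ring

lemma expect_ofReal_defect_le [IsIsometricSMul G X] {ps qs : List (PMF G)} {B B' : ℝ≥0∞}
    (hps : ∀ x, meanGromovProduct o x (walkLaw (ps.map (PMF.map (·⁻¹)))) ≤ B)
    (hqs : ∀ x, meanGromovProduct o x (walkLaw qs) ≤ B') (g : G) :
    (expect (jointLaw ps) fun l ↦ expect (jointLaw qs) fun l' ↦
      ENNReal.ofReal (defect o l.reverse.prod g l'.prod)) ≤ 2 * B + 2 * B' := by
  have hpast : (expect (jointLaw ps) fun l ↦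
      ENNReal.ofReal (gromovProduct o (g • o) (l.reverse.prod⁻¹ • o))) ≤ B := by
    simpa only [meanGromovProduct, walkLaw, jointLaw_map, expect_map, prod_map_inv]
      using hps (g • o)
  have hfuture (x : X) : (expect (jointLaw qs) fun l' ↦
      ENNReal.ofReal (gromovProduct o x (l'.prod • o))) ≤ B' := by
    simpa only [meanGromovProduct, walkLaw, expect_map] using hqs x
  calc (expect (jointLaw ps) fun l ↦ expect (jointLaw qs) fun l' ↦
        ENNReal.ofReal (defect o l.reverse.prod g l'.prod))
      = 2 * (expect (jointLaw ps) fun l ↦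
            ENNReal.ofReal (gromovProduct o (g • o) (l.reverse.prod⁻¹ • o))) +
          expect (jointLaw ps) fun l ↦ 2 * expect (jointLaw qs) fun l' ↦
            ENNReal.ofReal (gromovProduct o ((l.reverse.prod * g)⁻¹ • o) (l'.prod • o)) := by
        simp only [defect_eq_gromovProduct_add, ENNReal.ofReal_add, gromovProduct_nonneg,
          mul_nonneg, zero_le_two, ENNReal.ofReal_mul, ENNReal.ofReal_ofNat, expect_add,
          expect_const, expect_const_mul]
    _ ≤ 2 * B + expect (jointLaw ps) fun _ ↦ 2 * B' :=
        add_le_add (by gcongr) (expect_mono _ fun l ↦ by gcongr; exact hfuture _)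
    _ = 2 * B + 2 * B' := by rw [expect_const]

lemma defectExpFam_eq_toReal [IsIsometricSMul G X] {ν : ℤ → G → ℝ} {m n : ℕ}
    {P : Fin m → PMF G} {Q : Fin n → PMF G}
    (hP : ∀ (j : Fin m) g, ν (-(((j : ℕ) : ℤ) + 1)) g = (P j g).toReal)
    (hQ : ∀ (i : Fin n) g, ν (((i : ℕ) : ℤ) + 1) g = (Q i g).toReal) (g : G) :
    defectExpFam o ν m n g =
      (expect (jointLaw (List.ofFn P)) fun l ↦ expect (jointLaw (List.ofFn Q)) fun l' ↦
        ENNReal.ofReal (defect o l.reverse.prod g l'.prod)).toReal := by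
  have hdefect (a c : G) : 0 ≤ defect o a g c := by
    rw [defect_eq_gromovProduct_add]
    linarith [gromovProduct_nonneg o (g • o) (a⁻¹ • o),
      gromovProduct_nonneg o ((a * g)⁻¹ • o) (c • o)]
  simp only [expect_jointLaw_ofFn, ← ENNReal.tsum_mul_left, ← mul_assoc]
  rw [← ENNReal.tsum_prod (f := fun y z ↦ (∏ j, P j (y j)) * (∏ i, Q i (z i)) *
    ENNReal.ofReal (defect o (List.ofFn y).reverse.prod g (List.ofFn z).prod)),
    ENNReal.tsum_toReal_eq fun _ ↦ ENNReal.mul_ne_top (ENNReal.mul_ne_top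
      (ENNReal.prod_ne_top fun _ _ ↦ PMF.apply_ne_top _ _)
      (ENNReal.prod_ne_top fun _ _ ↦ PMF.apply_ne_top _ _)) ENNReal.ofReal_ne_top]
  simp only [defectExpFam, hP, hQ, negProd, posProd, ENNReal.toReal_mul, ENNReal.toReal_prod,
    ENNReal.toReal_ofReal, hdefect]

end Defect

section Laws

variable {G X : Type*}

/-- A probability measure given by a real-valued weight function, as a `PMF`. -/
noncomputable def IsProbMeasure.toPMF {μ : G → ℝ} (hμ : IsProbMeasure μ) : PMF G :=
  ⟨fun g ↦ ENNReal.ofReal (μ g), by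
    rw [ENNReal.summable.hasSum_iff, ← ENNReal.ofReal_tsum_of_nonneg hμ.1 hμ.2.1, hμ.2.2,
      ENNReal.ofReal_one]⟩

lemma IsProbMeasure.toPMF_apply {μ : G → ℝ} (hμ : IsProbMeasure μ) (g : G) :
    hμ.toPMF g = ENNReal.ofReal (μ g) :=
  rfl

variable [Group G] [MetricSpace X] [MulAction G X] {o : X} {μ ν : G → ℝ} {ε : ℝ}

lemma IsProbMeasure.meanDisplacement_toPMF (hμ : IsProbMeasure μ)
    (hL : HasFiniteFirstMoment o μ) :
    meanDisplacement o hμ.toPMF = ENNReal.ofReal (firstMoment o μ) := by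
  rw [firstMoment,
    ENNReal.ofReal_tsum_of_nonneg (fun g ↦ mul_nonneg (hμ.1 g) dist_nonneg) hL]
  simp only [meanDisplacement, expect, toPMF_apply, edist_dist, ENNReal.ofReal_mul (hμ.1 _)]

lemma sub_le_of_enorm01_sub_lt (h : enorm01 o (fun g ↦ ν g - μ g) < ENNReal.ofReal ε) (g : G) :
    μ g - ε ≤ ν g := by
  have hg : (1 + dist o (g • o)) * |ν g - μ g| < ε :=
    (ENNReal.ofReal_lt_ofReal_iff_of_nonneg (by positivity)).1 ((ENNReal.le_tsum g).trans_lt h)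
  linarith [neg_abs_le (ν g - μ g), mul_nonneg (dist_nonneg (x := o) (y := g • o))
    (abs_nonneg (ν g - μ g))]

lemma abs_mul_dist_le (η : G → ℝ) (g : G) :
    |η g * dist o (g • o)| ≤ (1 + dist o (g • o)) * |η g| := by
  rw [abs_mul, abs_of_nonneg dist_nonneg, mul_comm]
  gcongr
  linarith

lemma summable_of_enorm01_ne_top {η : G → ℝ} (h : enorm01 o η ≠ ⊤) :
    Summable fun g ↦ (1 + dist o (g • o)) * |η g| := by
  have hnonneg (g : G) : 0 ≤ (1 + dist o (g • o)) * |η g| := by positivity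
  simpa only [ENNReal.toReal_ofReal (hnonneg _)] using ENNReal.summable_toReal h

lemma hasFiniteFirstMoment_of_enorm01_ne_top {η : G → ℝ} (h : enorm01 o η ≠ ⊤) :
    HasFiniteFirstMoment o η :=
  .of_norm_bounded (summable_of_enorm01_ne_top h) (abs_mul_dist_le η)

lemma firstMoment_le_of_enorm01_lt {η : G → ℝ} (h : enorm01 o η < ENNReal.ofReal ε) :
    firstMoment o η ≤ ε := by
  have hnonneg (g : G) : 0 ≤ (1 + dist o (g • o)) * |η g| := by positivity
  have hsum := summable_of_enorm01_ne_top h.ne_top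
  calc firstMoment o η ≤ ∑' g, (1 + dist o (g • o)) * |η g| :=
        (hasFiniteFirstMoment_of_enorm01_ne_top h.ne_top).tsum_le_tsum
          (fun g ↦ (le_abs_self _).trans (abs_mul_dist_le η g)) hsum
    _ ≤ ε := by
        rw [enorm01, ← ENNReal.ofReal_tsum_of_nonneg hnonneg hsum] at h
        exact ((ENNReal.ofReal_lt_ofReal_iff_of_nonneg (tsum_nonneg hnonneg)).1 h).le

namespace HasFiniteFirstMoment

lemma of_enorm01_sub_ne_top (hL : HasFiniteFirstMoment o μ)
    (h : enorm01 o (fun g ↦ ν g - μ g) ≠ ⊤) : HasFiniteFirstMoment o ν := by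
  simpa only [HasFiniteFirstMoment, sub_mul, add_sub_cancel] using
    Summable.add hL (hasFiniteFirstMoment_of_enorm01_ne_top h)

lemma firstMoment_le_add_of_enorm01_sub_lt (hL : HasFiniteFirstMoment o μ)
    (h : enorm01 o (fun g ↦ ν g - μ g) < ENNReal.ofReal ε) :
    firstMoment o ν ≤ firstMoment o μ + ε := by
  have hsub := firstMoment_le_of_enorm01_lt h
  simp only [firstMoment, sub_mul] at hsub ⊢
  rw [(hL.of_enorm01_sub_ne_top h.ne_top).tsum_sub hL] at hsub
  linarith

end HasFiniteFirstMoment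

end Laws

theorem bounded_defect_general {G X : Type*} [Group G] [MetricSpace X] [MulAction G X]
    [IsIsometricSMul G X] {o : X} (hgeo : IsGeodesicSpace X) {μ : G → ℝ}
    (hne : NonElementary o μ) (M : ℝ) :
    ∃ K₁ : ℝ, 0 < K₁ ∧ ∃ ε : ℝ, 0 < ε ∧ ∀ (n m : ℕ) (g : G) (ν : ℤ → G → ℝ),
      (∀ i : ℤ, i ≠ 0 → IsProbMeasure (ν i) ∧ HasFiniteFirstMoment o (ν i) ∧
        firstMoment o (ν i) ≤ M ∧ ∀ h, μ h - ε ≤ ν i h) →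
      defectExpFam o ν m n g ≤ K₁ := by
  obtain ⟨B, hB, ε, hε, hfuture⟩ :=
    hne.exists_meanGromovProduct_walkLaw_le hgeo (M := ENNReal.ofReal M) ENNReal.ofReal_ne_top
  obtain ⟨B', hB', δ, hδ, hpast⟩ :=
    hne.inv.exists_meanGromovProduct_walkLaw_le hgeo (M := ENNReal.ofReal M) ENNReal.ofReal_ne_top
  refine ⟨(2 * B' + 2 * B).toReal + 1, by positivity, min ε δ, lt_min hε hδ,
    fun n m g ν hν ↦ ?_⟩
  have hlaw (i : ℤ) (hi : i ≠ 0) : ∃ p : PMF G, (∀ h, ν i h = (p h).toReal) ∧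
      meanDisplacement o p ≤ ENNReal.ofReal M ∧ ∀ h, ENNReal.ofReal (μ h - min ε δ) ≤ p h := by
    obtain ⟨hprob, hfinite, hmoment, hlower⟩ := hν i hi
    refine ⟨hprob.toPMF, fun h ↦ (ENNReal.toReal_ofReal (hprob.1 h)).symm, ?_,
      fun h ↦ ENNReal.ofReal_le_ofReal (hlower h)⟩
    rw [hprob.meanDisplacement_toPMF hfinite]
    exact ENNReal.ofReal_le_ofReal hmoment
  choose! law hlaw hdisp hlower using hlaw
  rw [defectExpFam_eq_toReal (P := fun j ↦ law (-(((j : ℕ) : ℤ) + 1)))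
    (Q := fun i ↦ law (((i : ℕ) : ℤ) + 1)) (fun _ ↦ hlaw _ (by omega))
    (fun _ ↦ hlaw _ (by omega))]
  refine (ENNReal.toReal_mono (by finiteness) (expect_ofReal_defect_le
    (hpast _ ?_) (hfuture _ ?_) g)).trans (le_add_of_nonneg_right zero_le_one)
  · simp only [List.forall_mem_map, List.forall_mem_ofFn_iff, meanDisplacement_map_inv,
      pmf_map_inv_apply]
    refine fun j ↦ ⟨hdisp _ (by omega), fun h ↦ le_trans ?_ (hlower _ (by omega) h⁻¹)⟩
    gcongr
    exact min_le_right _ _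
  · rw [List.forall_mem_ofFn_iff]
    refine fun i ↦ ⟨hdisp _ (by omega), fun h ↦ le_trans ?_ (hlower _ (by omega) h)⟩
    gcongr
    exact min_le_left _ _

/-- Corollary 3.2 (bounded defect): the expected defect is uniformly bounded. -/
theorem bounded_defect
    {G X : Type*} [Group G] [Countable G] [MetricSpace X] [MulAction G X]
    (o : X) (hgeo : IsGeodesicSpace X)
    (hiso : ∀ g : G, Isometry fun x : X => g • x)
    (hind : HasIndepContracting G o)
    (μ : G → ℝ) (hμ : IsProbMeasure μ) (hne : NonElementary o μ)
    (hL : HasFiniteFirstMoment o μ) :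
    ∃ K₁ : ℝ, 0 < K₁ ∧ ∃ ε : ℝ, 0 < ε ∧
      ∀ (n m : ℕ) (g : G) (ν : ℤ → G → ℝ),
        (∀ i : ℤ, i ≠ 0 → IsProbMeasure (ν i) ∧
          enorm01 o (fun h => ν i h - μ h) < ENNReal.ofReal ε) →
        defectExpFam o ν m n g ≤ K₁ := by
  have : IsIsometricSMul G X := ⟨hiso⟩
  obtain ⟨K₁, hK₁, ε, hε, hbound⟩ := bounded_defect_general hgeo hne (firstMoment o μ + 1)
  refine ⟨K₁, hK₁, min ε 1, lt_min hε one_pos, fun n m g ν hν ↦ hbound n m g ν fun i hi ↦ ?_⟩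
  obtain ⟨hprob, hclose⟩ := hν i hi
  have hmoment : firstMoment o (ν i) ≤ firstMoment o μ + min ε 1 :=
    hL.firstMoment_le_add_of_enorm01_sub_lt hclose
  exact ⟨hprob, hL.of_enorm01_sub_ne_top hclose.ne_top, by linarith [min_le_right ε 1],
    fun h ↦ by linarith [min_le_left ε 1, sub_le_of_enorm01_sub_lt hclose h]⟩
end
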